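/- arXiv:2006.07753 — 4 statements merged into one kernel-verified Lean document; each statement's English description precedes it below -/
import Mathlib

section
/- If f = h·conj(g) is a sense-preserving locally univalent logharmonic mapping on a simply connected domain with dilatation ω, and P_f ≡ 0, then ω is a constant; moreover, writing ω = (1−k)/k with Re(k) > 1/2, one has h(z) = (az + b)^k for some complex constants a, b (with az + b nonvanishing on the domain). -/
open Complex

/-- Second dilatation ω = g'h/(g h') of the logharmonic mapping h·conj g. -/
noncomputable def omegaOf (h g : ℂ → ℂ) (z : ℂ) : ℂ :=
  deriv g z * h z / (g z * deriv h z)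

/-- Pre-Schwarzian derivative of the logharmonic mapping h·conj g. -/
noncomputable def preSch (h g : ℂ → ℂ) (z : ℂ) : ℂ :=
  deriv (deriv h) z / deriv h z + omegaOf h g z * deriv h z / h z -
    deriv (omegaOf h g) z * (starRingEnd ℂ) (omegaOf h g z) /
      (1 - (‖omegaOf h g z‖ : ℂ) ^ 2)

theorem aux_deriv_zero (w v : ℂ → ℂ) (d e z : ℂ) (hw : HasDerivAt w d z)
    (hv : HasDerivAt v e z) (heq : (fun x => (starRingEnd ℂ) (w x)) =ᶠ[nhds z] v) : d = 0 := by
  have h1 : HasFDerivAt (𝕜 := ℝ) w _ z := hw.hasFDerivAt.restrictScalars ℝ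
  have h2 : HasFDerivAt (𝕜 := ℝ) v _ z := hv.hasFDerivAt.restrictScalars ℝ
  have h3 := (Complex.conjCLE : ℂ ≃L[ℝ] ℂ).toContinuousLinearMap.hasFDerivAt.comp z h1
  have h4 := h3.unique (h2.congr_of_eventuallyEq heq)
  have e1 := congrArg (fun T : ℂ →L[ℝ] ℂ => T 1) h4
  have e2 := congrArg (fun T : ℂ →L[ℝ] ℂ => T Complex.I) h4
  simp at e1 e2
  rw [← e1] at e2
  have e3 : (2 * Complex.I) * (starRingEnd ℂ) d = 0 := by linear_combination -e2
  simpa using e3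

theorem aux_const (w F : ℂ → ℂ) (Ω : Set ℂ) (hΩ : IsOpen Ω) (hw : DifferentiableOn ℂ w Ω)
    (hF : DifferentiableOn ℂ F Ω) (hlt : ∀ z ∈ Ω, ‖w z‖ < 1)
    (hP : ∀ z ∈ Ω, F z - deriv w z * (starRingEnd ℂ) (w z) / (1 - (‖w z‖ : ℂ) ^ 2) = 0) :
    ∀ z ∈ Ω, deriv w z = 0 := by
  have key : ∀ z ∈ Ω, (starRingEnd ℂ) (w z) * (deriv w z + F z * w z) = F z := by
    intro z hz
    have h1 : (1 - (‖w z‖ : ℂ) ^ 2) ≠ 0 := by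
      have h2 := hlt z hz
      have h3 : (1 - ‖w z‖ ^ 2) ≠ 0 := by nlinarith [norm_nonneg (w z)]
      exact_mod_cast h3
    have h4 := hP z hz
    have h5 := Complex.mul_conj' (w z)
    field_simp at h4
    rw [← h5] at h4
    linear_combination -h4
  intro z hz
  have hw' : DifferentiableOn ℂ (deriv w) Ω := hw.deriv hΩ
  have hn := hΩ.mem_nhds hz
  have hG : DifferentiableOn ℂ (fun x => deriv w x + F x * w x) Ω := hw'.add (hF.mul hw)
  by_cases h0 : deriv w z + F z * w z = 0
  · have hk := key z hz
    rw [h0, mul_zero] at hk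
    rw [← hk] at h0
    simpa using h0
  · have hGz := hG.differentiableAt hn
    refine aux_deriv_zero w (fun x => F x / (deriv w x + F x * w x)) _ _ z
      (hw.differentiableAt hn).hasDerivAt
      ((hF.differentiableAt hn).div hGz h0).hasDerivAt ?_
    filter_upwards [hn, hGz.continuousAt.eventually_ne h0] with x hx hx0
    rw [eq_div_iff hx0]
    exact key x hx

theorem preSch_eq_zero_characterization
    (Ω : Set ℂ) (hΩ : IsOpen Ω) (hconn : IsPreconnected Ω)
    (hsc : SimplyConnectedSpace Ω)
    (h g : ℂ → ℂ)
    (hh : DifferentiableOn ℂ h Ω) (hg : DifferentiableOn ℂ g Ω)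
    (hh0 : ∀ z ∈ Ω, h z ≠ 0) (hg0 : ∀ z ∈ Ω, g z ≠ 0)
    (hh' : ∀ z ∈ Ω, deriv h z ≠ 0)
    (hω : ∀ z ∈ Ω, ‖omegaOf h g z‖ < 1)
    (hP : ∀ z ∈ Ω, preSch h g z = 0) :
    ∃ (k a b : ℂ) (ℓ : ℂ → ℂ),
      1 / 2 < k.re ∧
      (∀ z ∈ Ω, omegaOf h g z = (1 - k) / k) ∧
      DifferentiableOn ℂ ℓ Ω ∧
      (∀ z ∈ Ω, a * z + b ≠ 0) ∧
      (∀ z ∈ Ω, Complex.exp (ℓ z) = a * z + b) ∧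
      (∀ z ∈ Ω, h z = Complex.exp (k * ℓ z)) := by
  have hh1 : DifferentiableOn ℂ (deriv h) Ω := hh.deriv hΩ
  have hh2 : DifferentiableOn ℂ (deriv (deriv h)) Ω := hh1.deriv hΩ
  have hw : DifferentiableOn ℂ (omegaOf h g) Ω :=
    ((hg.deriv hΩ).mul hh).div (hg.mul hh1) (fun z hz => mul_ne_zero (hg0 z hz) (hh' z hz))
  have hF : DifferentiableOn ℂ
      (fun z => deriv (deriv h) z / deriv h z + omegaOf h g z * deriv h z / h z) Ω :=
    (hh2.div hh1 hh').add ((hw.mul hh1).div hh hh0)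
  have hw0 := aux_const (omegaOf h g) _ Ω hΩ hw hF hω hP
  obtain ⟨c, hc⟩ := hΩ.exists_is_const_of_deriv_eq_zero hconn hw hw0
  obtain ⟨z₀, hz₀⟩ : Ω.Nonempty := IsSimplyConnected.nonempty hsc
  have hc1 : ‖c‖ < 1 := by rw [← hc z₀ hz₀]; exact hω z₀ hz₀
  have hODE : ∀ z ∈ Ω, deriv (deriv h) z / deriv h z + c * deriv h z / h z = 0 := by
    intro z hz
    have h1 := hP z hz
    simp only [preSch, hw0 z hz, hc z hz] at h1
    simpa using h1
  obtain ⟨L, hLc, hL⟩ := Complex.exists_continuousOn_eqOn_exp_comp (U := Ω) hsc hΩ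
    hh.continuousOn (by rintro ⟨z, hz, h1⟩; exact hh0 z hz h1)
  have hLe : ∀ z ∈ Ω, Complex.exp (L z) = h z := fun z hz => hL hz
  have hLd : ∀ z ∈ Ω, HasDerivAt L (deriv h z / h z) z := by
    intro z hz
    have hn := hΩ.mem_nhds hz
    have h1 := HasDerivAt.of_comp_left (hLc.continuousAt hn) (Complex.hasDerivAt_exp (L z))
      (hh.differentiableAt hn).hasDerivAt (Complex.exp_ne_zero _)
      (Filter.eventuallyEq_of_mem hn hL)
    rw [hLe z hz] at h1
    convert h1 using 1
    try field_simp
  have hQ : ∀ z ∈ Ω, HasDerivAt (fun z => deriv h z * Complex.exp (c * L z)) 0 z := by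
    intro z hz
    have hn := hΩ.mem_nhds hz
    have h1 := (hh1.differentiableAt hn).hasDerivAt.mul ((hLd z hz).const_mul c).cexp
    refine h1.congr_deriv ?_
    have h2 := hODE z hz
    have h3 := hh0 z hz
    have h4 := hh' z hz
    field_simp at h2 ⊢
    linear_combination Complex.exp (c * L z) * h2
  obtain ⟨A, hA⟩ := hΩ.exists_is_const_of_deriv_eq_zero hconn
    (fun z hz => (hQ z hz).differentiableAt.differentiableWithinAt) (fun z hz => (hQ z hz).deriv)
  have hE : ∀ z ∈ Ω, HasDerivAt
      (fun z => Complex.exp ((1 + c) * L z) - (1 + c) * A * z) 0 z := by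
    intro z hz
    have h1 := ((hLd z hz).const_mul (1 + c)).cexp.sub ((hasDerivAt_id z).const_mul ((1 + c) * A))
    refine h1.congr_deriv ?_
    have h3 := hh0 z hz
    rw [← hA z hz, add_mul, one_mul, Complex.exp_add, hLe z hz]
    field_simp
    ring
  obtain ⟨B, hB⟩ := hΩ.exists_is_const_of_deriv_eq_zero hconn
    (fun z hz => (hE z hz).differentiableAt.differentiableWithinAt) (fun z hz => (hE z hz).deriv)
  have hc0 : 1 + c ≠ 0 := by
    intro h1
    have : c = -1 := by linear_combination h1
    rw [this] at hc1
    simp at hc1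
  have hEq : ∀ z ∈ Ω, Complex.exp ((1 + c) * L z) = (1 + c) * A * z + B := by
    intro z hz
    linear_combination hB z hz
  refine ⟨(1 + c)⁻¹, (1 + c) * A, B, fun z => (1 + c) * L z, ?_, ?_, ?_, ?_, hEq, ?_⟩
  · have h1 : 0 < Complex.normSq (1 + c) := Complex.normSq_pos.mpr hc0
    have h2 : Complex.normSq c < 1 := by
      rw [Complex.normSq_eq_norm_sq]
      nlinarith [norm_nonneg c]
    rw [Complex.inv_re, lt_div_iff₀ h1]
    simp only [Complex.normSq_apply, Complex.add_re, Complex.add_im, Complex.one_re,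
      Complex.one_im] at h2 ⊢
    nlinarith
  · intro z hz
    rw [hc z hz]
    field_simp
    try ring
  · exact fun z hz => ((hLd z hz).const_mul (1 + c)).differentiableAt.differentiableWithinAt
  · intro z hz
    rw [← hEq z hz]
    exact Complex.exp_ne_zero _
  · intro z hz
    rw [← hLe z hz]
    congr 1
    field_simp
end

section
/- Let f = h·conj(g) be a nonvanishing sense-preserving logharmonic mapping on the unit disk with dilatation ω, and fix z₀ ∈ 𝔻. Define a = (1 + ω(z₀))/(1 − |ω(z₀)|²) and b = −conj(ω(z₀))·(1 + ω(z₀))/(1 − |ω(z₀)|²). Then the analytic function φ = h^a · g^b (defined via branches of log h and log g) satisfies Pφ(z₀) = P_f(z₀), i.e. (φ''/φ')(z₀) = P_f(z₀). -/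
open Complex

theorem preSch_eq_preSch_of_power_product
    (h g : ℂ → ℂ)
    (hh : DifferentiableOn ℂ h (Metric.ball (0 : ℂ) 1))
    (hg : DifferentiableOn ℂ g (Metric.ball (0 : ℂ) 1))
    (hh0 : ∀ z ∈ Metric.ball (0 : ℂ) 1, h z ≠ 0)
    (hg0 : ∀ z ∈ Metric.ball (0 : ℂ) 1, g z ≠ 0)
    (hh' : ∀ z ∈ Metric.ball (0 : ℂ) 1, deriv h z ≠ 0)
    (hω : ∀ z ∈ Metric.ball (0 : ℂ) 1, ‖omegaOf h g z‖ < 1)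
    (Lh Lg : ℂ → ℂ)
    (hLh : DifferentiableOn ℂ Lh (Metric.ball (0 : ℂ) 1))
    (hLg : DifferentiableOn ℂ Lg (Metric.ball (0 : ℂ) 1))
    (hLhlog : ∀ z ∈ Metric.ball (0 : ℂ) 1, Complex.exp (Lh z) = h z)
    (hLglog : ∀ z ∈ Metric.ball (0 : ℂ) 1, Complex.exp (Lg z) = g z)
    (z₀ : ℂ) (hz₀ : z₀ ∈ Metric.ball (0 : ℂ) 1)
    (a b : ℂ)
    (ha : a = (1 + omegaOf h g z₀) / (1 - (‖omegaOf h g z₀‖ : ℂ) ^ 2))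
    (hb : b = -(starRingEnd ℂ) (omegaOf h g z₀) *
      ((1 + omegaOf h g z₀) / (1 - (‖omegaOf h g z₀‖ : ℂ) ^ 2)))
    (φ : ℂ → ℂ)
    (hφ : ∀ z ∈ Metric.ball (0 : ℂ) 1, φ z = Complex.exp (a * Lh z + b * Lg z)) :
    deriv (deriv φ) z₀ / deriv φ z₀ = preSch h g z₀ := by
  have hs : IsOpen (Metric.ball (0 : ℂ) 1) := Metric.isOpen_ball
  have hhd : DifferentiableOn ℂ (deriv h) (Metric.ball (0 : ℂ) 1) := hh.deriv hs
  have hgd : DifferentiableOn ℂ (deriv g) (Metric.ball (0 : ℂ) 1) := hg.deriv hs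
  have key : ∀ (k L : ℂ → ℂ), DifferentiableOn ℂ L (Metric.ball (0 : ℂ) 1) →
      (∀ z ∈ Metric.ball (0 : ℂ) 1, Complex.exp (L z) = k z) →
      ∀ z ∈ Metric.ball (0 : ℂ) 1, HasDerivAt L (deriv k z / k z) z := by
    intro k L hL hk z hz
    have h1 : HasDerivAt L (deriv L z) z := (hL.differentiableAt (hs.mem_nhds hz)).hasDerivAt
    have h2 : k =ᶠ[nhds z] fun w => Complex.exp (L w) := by
      filter_upwards [hs.mem_nhds hz] with w hw
      exact (hk w hw).symm
    have h3 := (h1.cexp.congr_of_eventuallyEq h2).deriv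
    have h4 : deriv k z / k z = deriv L z := by
      rw [h3, ← hk z hz]
      field_simp [Complex.exp_ne_zero]
    rw [h4]
    exact h1
  have hφd : ∀ z ∈ Metric.ball (0 : ℂ) 1,
      HasDerivAt φ (φ z * (deriv h z / h z * (a + b * omegaOf h g z))) z := by
    intro z hz
    have h2 : φ =ᶠ[nhds z] fun w => Complex.exp (a * Lh w + b * Lg w) := by
      filter_upwards [hs.mem_nhds hz] with w hw
      exact hφ w hw
    have h1 := ((((key h Lh hLh hLhlog z hz).const_mul a).add
      ((key g Lg hLg hLglog z hz).const_mul b)).cexp).congr_of_eventuallyEq h2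
    refine h1.congr_deriv (Eq.symm ?_)
    have e1 := hh0 z hz
    have e2 := hg0 z hz
    have e3 := hh' z hz
    rw [hφ z hz]
    simp only [omegaOf, Pi.add_apply]
    congr 1
    field_simp
  have hωd : HasDerivAt (omegaOf h g) (deriv (omegaOf h g) z₀) z₀ := by
    have n := hs.mem_nhds hz₀
    have : DifferentiableAt ℂ (fun z => deriv g z * h z / (g z * deriv h z)) z₀ :=
      ((hgd.differentiableAt n).mul (hh.differentiableAt n)).div
        ((hg.differentiableAt n).mul (hhd.differentiableAt n))
        (mul_ne_zero (hg0 _ hz₀) (hh' _ hz₀))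
    exact DifferentiableAt.hasDerivAt this
  have hhz := (hh.differentiableAt (hs.mem_nhds hz₀)).hasDerivAt
  have hhdz := (hhd.differentiableAt (hs.mem_nhds hz₀)).hasDerivAt
  have e1 := hh0 z₀ hz₀
  have e3 := hh' z₀ hz₀
  have e4 : φ z₀ ≠ 0 := by rw [hφ z₀ hz₀]; exact Complex.exp_ne_zero _
  have hd2 := (hφd z₀ hz₀).mul ((hhdz.div hhz e1).mul ((hωd.const_mul b).const_add a))
  have hev : deriv φ =ᶠ[nhds z₀]
      (φ * (deriv h / h * fun z => a + b * omegaOf h g z)) := by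
    filter_upwards [hs.mem_nhds hz₀] with w hw
    exact (hφd w hw).deriv
  have hdd := (hd2.congr_of_eventuallyEq hev).deriv
  have hw := hω z₀ hz₀
  rw [hdd, (hφd z₀ hz₀).deriv]
  simp only [preSch, Pi.mul_apply, Pi.div_apply]
  have hnorm : (starRingEnd ℂ) (omegaOf h g z₀) * omegaOf h g z₀
      = (‖omegaOf h g z₀‖ : ℂ) ^ 2 := Complex.conj_mul' _
  have hD : (1 - (‖omegaOf h g z₀‖ : ℂ) ^ 2) ≠ 0 := by
    have : (1 - ‖omegaOf h g z₀‖ ^ 2 : ℝ) ≠ 0 := by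
      have := norm_nonneg (omegaOf h g z₀)
      nlinarith
    exact_mod_cast this
  have hW : 1 + omegaOf h g z₀ ≠ 0 := by
    intro h0
    have : omegaOf h g z₀ = -1 := by linear_combination h0
    rw [this] at hw
    simp at hw
  have hab : a + b * omegaOf h g z₀ = 1 + omegaOf h g z₀ := by
    have : a + b * omegaOf h g z₀ = (1 + omegaOf h g z₀) / (1 - (‖omegaOf h g z₀‖ : ℂ) ^ 2) *
        (1 - (starRingEnd ℂ) (omegaOf h g z₀) * omegaOf h g z₀) := by
      rw [ha, hb]; ring
    rw [this, hnorm]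
    field_simp
  rw [hab, hb]
  generalize (starRingEnd ℂ) (omegaOf h g z₀) = c at *
  generalize (1 - (‖omegaOf h g z₀‖ : ℂ) ^ 2) = D at *
  generalize deriv (omegaOf h g) z₀ = w' at *
  generalize omegaOf h g z₀ = w at *
  field_simp
  ring
end

section
/- Becker-type univalence criterion for logharmonic mappings: let f = h·conj(g) : 𝔻 → ℂ be a nonvanishing sense-preserving logharmonic mapping with dilatation ω. If for all z ∈ 𝔻, |z·P_f(z)| + (1+|ω(z)|)·|z·h'(z)/h(z)| + |z·ω'(z)|/(1−|ω(z)|²) ≤ 1/(1−|z|²), then f is univalent in 𝔻. -/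
lemma strict_est {f : ℂ → ℂ} {f' a : ℂ} (hf : HasStrictDerivAt f f' a) {ε : ℝ} (hε : 0 < ε) :
    ∃ δ > 0, ∀ x ∈ Metric.ball a δ, ∀ y ∈ Metric.ball a δ,
      ‖f x - f y - f' * (x - y)‖ ≤ ε * ‖x - y‖ := by
  have h1 := hf.hasStrictFDerivAt.isLittleO.def hε
  obtain ⟨δ, hδ, h2⟩ := Metric.eventually_nhds_iff.1 h1
  refine ⟨δ, hδ, fun x hx y hy => ?_⟩
  have := @h2 (x, y) (by rw [Prod.dist_eq]; exact max_lt hx hy)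
  simpa [mul_comm] using this

lemma local_inj {f k : ℂ → ℂ} {f' k' a : ℂ} (hf : HasStrictDerivAt f f' a)
    (hk : HasStrictDerivAt k k' a) (c0 : ℝ) (hD : f' + c0 * k' ≠ 0) :
    ∃ δ > 0, ∀ c : ℝ, |c - c0| < δ → ∀ x ∈ Metric.ball a δ, ∀ y ∈ Metric.ball a δ,
      f x + c * k x = f y + c * k y → x = y := by
  have hD' : 0 < ‖f' + c0 * k'‖ := norm_pos_iff.2 hD
  set d := ‖f' + c0 * k'‖ with hd
  have hε : 0 < d / (4 * (2 + |c0|)) := by positivity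
  obtain ⟨δ1, hδ1, h1⟩ := strict_est hf hε
  obtain ⟨δ2, hδ2, h2⟩ := strict_est hk hε
  set ε := d / (4 * (2 + |c0|)) with hεd
  have hδ3 : 0 < d / (4 * (‖k'‖ + 1)) := by positivity
  refine ⟨min (min δ1 δ2) (min 1 (d / (4 * (‖k'‖ + 1)))), by positivity, ?_⟩
  intro c hc x hx y hy hxy
  simp only [lt_min_iff, Metric.mem_ball] at hc hx hy
  have e1 := h1 x hx.1.1 y hy.1.1
  have e2 := h2 x hx.1.2 y hy.1.2
  by_contra hne
  have hpos : 0 < ‖x - y‖ := norm_pos_iff.2 (sub_ne_zero.2 hne)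
  have key : (f' + c0 * k') * (x - y) = -(f x - f y - f' * (x - y))
      - c * (k x - k y - k' * (x - y)) - ((c - c0 : ℝ) : ℂ) * k' * (x - y) := by
    push_cast
    linear_combination hxy
  have n1 : d * ‖x - y‖ ≤ ε * ‖x - y‖ + |c| * (ε * ‖x - y‖) + |c - c0| * ‖k'‖ * ‖x - y‖ := by
    rw [hd, ← norm_mul, key]
    refine (norm_sub_le _ _).trans (add_le_add ((norm_sub_le _ _).trans (add_le_add ?_ ?_)) ?_)
    · rw [norm_neg]; exact e1
    · rw [norm_mul, Complex.norm_real, Real.norm_eq_abs]; gcongr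
    · rw [norm_mul, norm_mul, Complex.norm_real, Real.norm_eq_abs]
  have n2 : |c| ≤ 1 + |c0| := by
    have := abs_sub_abs_le_abs_sub c c0
    linarith [hc.2.1]
  have n3 : |c - c0| * ‖k'‖ ≤ d / 4 := by
    have h3 : |c - c0| * (4 * (‖k'‖ + 1)) ≤ d := by
      have := hc.2.2.le
      rwa [le_div_iff₀ (by positivity)] at this
    nlinarith [abs_nonneg (c - c0)]
  have n4 : ε * (1 + |c|) ≤ d / 4 := by
    have : ε * (2 + |c0|) = d / 4 := by rw [hεd]; field_simp
    nlinarith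
  nlinarith

lemma large_inj {f k : ℂ → ℂ} {d a : ℂ} (hf : HasStrictDerivAt f d a)
    (hk : HasStrictDerivAt k d a) (hd : d ≠ 0) :
    ∃ δ > 0, ∀ c : ℝ, 0 ≤ c → ∀ x ∈ Metric.ball a δ, ∀ y ∈ Metric.ball a δ,
      f x + c * k x = f y + c * k y → x = y := by
  have hd' : 0 < ‖d‖ := norm_pos_iff.2 hd
  obtain ⟨δ1, hδ1, h1⟩ := strict_est hf (half_pos hd')
  obtain ⟨δ2, hδ2, h2⟩ := strict_est hk (half_pos hd')
  refine ⟨min δ1 δ2, by positivity, ?_⟩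
  intro c hc x hx y hy hxy
  simp only [lt_min_iff, Metric.mem_ball] at hx hy
  have e1 := h1 x hx.1 y hy.1
  have e2 := h2 x hx.2 y hy.2
  by_contra hne
  have hpos : 0 < ‖x - y‖ := norm_pos_iff.2 (sub_ne_zero.2 hne)
  have key : ((1 + c : ℝ) : ℂ) * (d * (x - y)) = -(f x - f y - d * (x - y))
      - c * (k x - k y - d * (x - y)) := by
    push_cast
    linear_combination hxy
  have n1 : (1 + c) * (‖d‖ * ‖x - y‖) ≤ ‖d‖ / 2 * ‖x - y‖ + c * (‖d‖ / 2 * ‖x - y‖) := by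
    have : (1 + c) * (‖d‖ * ‖x - y‖) = ‖((1 + c : ℝ) : ℂ) * (d * (x - y))‖ := by
      rw [norm_mul, norm_mul, Complex.norm_real, Real.norm_of_nonneg (by positivity)]
    rw [this, key]
    refine (norm_sub_le _ _).trans (add_le_add ?_ ?_)
    · rw [norm_neg]; exact e1
    · rw [norm_mul, Complex.norm_real, Real.norm_of_nonneg hc]; gcongr
  have : 0 < (1 + c) * (‖d‖ * ‖x - y‖) := by positivity
  nlinarith

lemma norm_bound_aux {c s q : ℝ} (hc : 0 ≤ c) (hs : (1 + c) * s < 1) (hs0 : 0 ≤ s)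
    (hq : q ≤ 1 / (1 - s)) : c * q < 1 + c := by
  have h1 : 0 < 1 - s := by nlinarith
  have : c * q ≤ c * (1 / (1 - s)) := by gcongr
  refine this.trans_lt ?_
  rw [mul_one_div, div_lt_iff₀ h1]
  nlinarith

lemma step_aux {φ : ℂ → ℂ} (hφ : DifferentiableOn ℂ φ (Metric.ball 0 1))
    (hφ' : ∀ z ∈ Metric.ball (0 : ℂ) 1, deriv φ z ≠ 0)
    (hb : ∀ z ∈ Metric.ball (0 : ℂ) 1,
      ‖z * (deriv (deriv φ) z / deriv φ z)‖ ≤ 1 / (1 - ‖z‖ ^ 2))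
    {ρ : ℝ} (hρ : ρ < 1) {c0 : ℝ} (hc0 : 0 ≤ c0) {ζ0 : ℂ} (hζ0 : (1 + c0) * ‖ζ0‖ ^ 2 ≤ ρ) :
    ∃ ζ : ℝ → ℂ, ζ c0 = ζ0 ∧ ContinuousAt ζ c0 ∧ ∀ᶠ c : ℝ in nhdsWithin c0 (Set.Ioi c0),
      (φ (ζ c) + c * (ζ c * deriv φ (ζ c)) = φ ζ0 + c0 * (ζ0 * deriv φ ζ0)) ∧
      (1 + c) * ‖ζ c‖ ^ 2 ≤ ρ := by
  by_cases h0 : ζ0 = 0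
  · subst h0
    refine ⟨fun _ => 0, rfl, continuousAt_const, ?_⟩
    filter_upwards with c
    simpa using hζ0
  have hn0 : 0 < ‖ζ0‖ ^ 2 := by positivity
  have hball : ζ0 ∈ Metric.ball (0 : ℂ) 1 := by
    rw [mem_ball_zero_iff]
    nlinarith [norm_nonneg ζ0]
  have hd : HasStrictDerivAt φ (deriv φ ζ0) ζ0 :=
    (hφ.analyticAt (Metric.isOpen_ball.mem_nhds hball)).hasStrictDerivAt
  have hdd : HasStrictDerivAt (deriv φ) (deriv (deriv φ) ζ0) ζ0 :=
    ((hφ.analyticAt (Metric.isOpen_ball.mem_nhds hball)).deriv).hasStrictDerivAt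
  have hne := hφ' ζ0 hball
  set A := deriv φ ζ0 with hA
  set B := deriv (deriv φ) ζ0 with hB
  set v := φ ζ0 + c0 * (ζ0 * A) with hv
  set q := ζ0 * (B / A) with hq
  have hqb : c0 * ‖q‖ < 1 + c0 :=
    norm_bound_aux hc0 (lt_of_le_of_lt hζ0 hρ) hn0.le (hb ζ0 hball)
  set w : ℂ := 1 + c0 + c0 * q with hw
  have hwX : ‖w - ((1 + c0 : ℝ) : ℂ)‖ < 1 + c0 := by
    have : w - ((1 + c0 : ℝ) : ℂ) = (c0 : ℂ) * q := by rw [hw]; push_cast; ring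
    rw [this, norm_mul, Complex.norm_real, Real.norm_of_nonneg hc0]
    exact hqb
  have hwsq : w.re ^ 2 + w.im ^ 2 < 2 * (1 + c0) * w.re := by
    have h1 : ‖w - ((1 + c0 : ℝ) : ℂ)‖ ^ 2 < (1 + c0) ^ 2 := by gcongr
    rw [← Complex.normSq_eq_norm_sq, Complex.normSq_apply] at h1
    simp only [Complex.sub_re, Complex.sub_im, Complex.ofReal_re, Complex.ofReal_im] at h1
    nlinarith
  have hw0 : w ≠ 0 := by
    intro h; rw [h] at hwsq; simp at hwsq
  -- the parameter as a function of the point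
  let C : ℂ → ℂ := fun z => (v - φ z) / (z * deriv φ z)
  have hC0 : C ζ0 = c0 := by
    simp only [C, hv, ← hA]; field_simp; ring
  have hCd : HasStrictDerivAt C (-(w / ζ0)) ζ0 := by
    have h1 := (hd.const_sub v).fun_div ((hasStrictDerivAt_id ζ0).fun_mul hdd)
      (mul_ne_zero h0 hne)
    refine h1.congr_deriv ?_
    simp only [id, ← hA, hw, hv, hq]
    field_simp
    ring
  have hC'0 : -(w / ζ0) ≠ 0 := neg_ne_zero.2 (div_ne_zero hw0 h0)
  let Z := hCd.localInverse C _ ζ0 hC'0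
  have hZ : HasStrictDerivAt Z (-(w / ζ0))⁻¹ (c0 : ℂ) := hC0 ▸ hCd.to_localInverse hC'0
  have hZ0 : Z c0 = ζ0 := by
    have := (hCd.hasStrictFDerivAt_equiv hC'0).localInverse_apply_image
    rw [hC0] at this
    exact this
  have hZr : ∀ᶠ x in nhds (c0 : ℂ), C (Z x) = x := hC0 ▸ hCd.eventually_right_inverse hC'0
  have hζd : HasDerivAt (fun c : ℝ => Z c) (-(w / ζ0))⁻¹ c0 := hZ.hasDerivAt.comp_ofReal
  have hcont : ContinuousAt (fun c : ℝ => Z c) c0 := hζd.continuousAt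
  refine ⟨fun c => Z c, hZ0, hcont, ?_⟩
  have hm : HasDerivAt (fun c : ℝ => (1 + c) * ‖Z c‖ ^ 2)
      (1 * ‖Z c0‖ ^ 2 + (1 + c0) * (2 * inner ℝ (Z c0) (-(w / ζ0))⁻¹)) c0 :=
    ((hasDerivAt_id c0).const_add 1).mul hζd.norm_sq
  have hneg : 1 * ‖Z c0‖ ^ 2 + (1 + c0) * (2 * inner ℝ (Z c0) (-(w / ζ0))⁻¹) < 0 := by
    rw [hZ0]
    have e : inner ℝ ζ0 (-(w / ζ0))⁻¹ = -(‖ζ0‖ ^ 2 * (w.re / (w.re ^ 2 + w.im ^ 2))) := by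
      have e1 : (-(w / ζ0))⁻¹ = -(ζ0 * w⁻¹) := by
        rw [inv_neg, inv_div]; rfl
      rw [e1, Complex.inner, ← Complex.normSq_eq_norm_sq]
      simp only [Complex.mul_re, Complex.mul_im, Complex.neg_re, Complex.neg_im, Complex.inv_re,
        Complex.inv_im, Complex.conj_re, Complex.conj_im, Complex.normSq_apply]
      ring
    rw [e]
    have hp : 0 < w.re ^ 2 + w.im ^ 2 := by
      have := Complex.normSq_pos.2 hw0
      rw [Complex.normSq_apply] at this
      nlinarith
    have : 1 < 2 * (1 + c0) * (w.re / (w.re ^ 2 + w.im ^ 2)) := by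
      rw [← mul_div_assoc, lt_div_iff₀ hp]; linarith
    nlinarith
  have hev1 : ∀ᶠ c : ℝ in nhdsWithin c0 (Set.Ioi c0), (1 + c) * ‖Z c‖ ^ 2 ≤ ρ := by
    have h1 := (hm.hasDerivWithinAt (s := Set.Ioi c0)).limsup_slope_le' (by simp) hneg
    filter_upwards [h1, self_mem_nhdsWithin] with c hc hc'
    rw [Set.mem_Ioi] at hc'
    rw [slope_def_field, div_lt_iff₀ (sub_pos.2 hc'), hZ0] at hc
    linarith
  have hev2 : ∀ᶠ c : ℝ in nhds c0, C (Z c) = c :=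
    Complex.continuous_ofReal.continuousAt.eventually hZr
  have hev3 : ∀ᶠ c : ℝ in nhds c0, Z c * deriv φ (Z c) ≠ 0 := by
    have h1 : ContinuousAt (fun z => z * deriv φ z) (Z c0) := by
      rw [hZ0]; exact continuousAt_id.mul hdd.hasDerivAt.continuousAt
    have h2 : ContinuousAt (fun c : ℝ => Z c * deriv φ (Z c)) c0 :=
      ContinuousAt.comp (f := fun c : ℝ => Z c) (g := fun z => z * deriv φ z) h1 hcont
    exact h2.eventually_ne (by rw [hZ0]; exact mul_ne_zero h0 hne)
  filter_upwards [hev1, nhdsWithin_le_nhds hev2, nhdsWithin_le_nhds hev3] with c h1 h2 h3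
  refine ⟨?_, h1⟩
  have h4 : (v - φ (Z c)) / (Z c * deriv φ (Z c)) = c := h2
  rw [div_eq_iff h3] at h4
  linear_combination -h4

theorem becker_analytic {φ : ℂ → ℂ} (hφ : DifferentiableOn ℂ φ (Metric.ball 0 1))
    (hφ' : ∀ z ∈ Metric.ball (0 : ℂ) 1, deriv φ z ≠ 0)
    (hb : ∀ z ∈ Metric.ball (0 : ℂ) 1,
      ‖z * (deriv (deriv φ) z / deriv φ z)‖ ≤ 1 / (1 - ‖z‖ ^ 2)) :
    Set.InjOn φ (Metric.ball 0 1) := by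
  intro a ha b hb' hab
  by_contra hne
  rw [mem_ball_zero_iff] at ha hb'
  obtain ⟨ρ, hρ0, hρ, haρ, hbρ⟩ : ∃ ρ : ℝ, 0 ≤ ρ ∧ ρ < 1 ∧ ‖a‖ ^ 2 ≤ ρ ∧ ‖b‖ ^ 2 ≤ ρ := by
    refine ⟨max (‖a‖ ^ 2) (‖b‖ ^ 2), by positivity, max_lt ?_ ?_, le_max_left _ _, le_max_right _ _⟩
    · nlinarith [norm_nonneg a]
    · nlinarith [norm_nonneg b]
  have hsmall : ∀ c : ℝ, 0 ≤ c → ∀ z : ℂ, (1 + c) * ‖z‖ ^ 2 ≤ ρ → ‖z‖ ^ 2 ≤ ρ := by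
    intro c hc z hz; nlinarith [sq_nonneg ‖z‖]
  have hinball : ∀ z : ℂ, ‖z‖ ^ 2 ≤ ρ → z ∈ Metric.ball (0 : ℂ) 1 := by
    intro z hz; rw [mem_ball_zero_iff]; nlinarith [norm_nonneg z]
  have hd : ∀ z ∈ Metric.ball (0 : ℂ) 1, HasStrictDerivAt φ (deriv φ z) z := fun z hz =>
    (hφ.analyticAt (Metric.isOpen_ball.mem_nhds hz)).hasStrictDerivAt
  have hdk : ∀ z ∈ Metric.ball (0 : ℂ) 1, HasStrictDerivAt (fun z => z * deriv φ z)
      (deriv φ z + z * deriv (deriv φ) z) z := fun z hz => by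
    have := (hasStrictDerivAt_id z).fun_mul
      ((hφ.analyticAt (Metric.isOpen_ball.mem_nhds hz)).deriv).hasStrictDerivAt
    simpa using this
  let S : Set ℝ := {c | ∃ x y : ℂ, x ≠ y ∧ (1 + c) * ‖x‖ ^ 2 ≤ ρ ∧ (1 + c) * ‖y‖ ^ 2 ≤ ρ ∧
    φ x + c * (x * deriv φ x) = φ y + c * (y * deriv φ y)}
  -- large parameter
  have h00 : (0 : ℂ) ∈ Metric.ball (0 : ℂ) 1 := by simp
  have hk0 := hdk 0 h00
  rw [zero_mul, add_zero] at hk0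
  obtain ⟨δ, hδ, hinj⟩ := large_inj (hd 0 h00) hk0 (hφ' 0 h00)
  let T : ℝ := 1 / δ ^ 2
  have hT : 0 ≤ T := by positivity
  have hTS : T ∉ S := by
    rintro ⟨x, y, hxy, hx, hy, he⟩
    have aux : ∀ z : ℂ, (1 + T) * ‖z‖ ^ 2 ≤ ρ → z ∈ Metric.ball (0 : ℂ) δ := by
      intro z hz
      rw [mem_ball_zero_iff]
      have h1 : T * δ ^ 2 = 1 := by simp only [T]; field_simp
      by_contra! hcon
      have h2 : δ ^ 2 ≤ ‖z‖ ^ 2 := by gcongr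
      nlinarith [sq_nonneg ‖z‖]
    exact hxy (hinj T hT x (aux x hx) y (aux y hy) he)
  -- closedness
  have hclosed : IsClosed (S ∩ Set.Icc 0 T) := by
    rw [← isSeqClosed_iff_isClosed]
    intro cs c hcs hlim
    have hc : c ∈ Set.Icc 0 T := isClosed_Icc.mem_of_tendsto hlim
      (Filter.Eventually.of_forall fun n => (hcs n).2)
    refine ⟨?_, hc⟩
    choose x y hxy hx hy he using fun n => (hcs n).1
    have hK : IsCompact ((Metric.closedBall (0 : ℂ) 1) ×ˢ (Metric.closedBall (0 : ℂ) 1)) :=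
      (isCompact_closedBall _ _).prod (isCompact_closedBall _ _)
    obtain ⟨⟨x0, y0⟩, -, ψ, hψ, hlim2⟩ := hK.tendsto_subseq (x := fun n => (x n, y n))
      (fun n => ⟨Metric.ball_subset_closedBall (hinball _ (hsmall _ (hcs n).2.1 _ (hx n))),
        Metric.ball_subset_closedBall (hinball _ (hsmall _ (hcs n).2.1 _ (hy n)))⟩)
    have hxl : Filter.Tendsto (fun n => x (ψ n)) Filter.atTop (nhds x0) :=
      (continuous_fst.tendsto _).comp hlim2
    have hyl : Filter.Tendsto (fun n => y (ψ n)) Filter.atTop (nhds y0) :=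
      (continuous_snd.tendsto _).comp hlim2
    have hcl : Filter.Tendsto (fun n => cs (ψ n)) Filter.atTop (nhds c) :=
      hlim.comp hψ.tendsto_atTop
    have hx0 : (1 + c) * ‖x0‖ ^ 2 ≤ ρ := le_of_tendsto
      ((hcl.const_add 1).mul (hxl.norm.pow 2)) (Filter.Eventually.of_forall fun n => hx _)
    have hy0 : (1 + c) * ‖y0‖ ^ 2 ≤ ρ := le_of_tendsto
      ((hcl.const_add 1).mul (hyl.norm.pow 2)) (Filter.Eventually.of_forall fun n => hy _)
    have hxb := hinball _ (hsmall _ hc.1 _ hx0)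
    have hyb := hinball _ (hsmall _ hc.1 _ hy0)
    have hcc : Filter.Tendsto (fun n => (cs (ψ n) : ℂ)) Filter.atTop (nhds (c : ℂ)) :=
      (Complex.continuous_ofReal.tendsto _).comp hcl
    have lx := ((hd x0 hxb).hasDerivAt.continuousAt.tendsto.comp hxl).add
      (hcc.mul ((hdk x0 hxb).hasDerivAt.continuousAt.tendsto.comp hxl))
    have ly := ((hd y0 hyb).hasDerivAt.continuousAt.tendsto.comp hyl).add
      (hcc.mul ((hdk y0 hyb).hasDerivAt.continuousAt.tendsto.comp hyl))
    refine ⟨x0, y0, ?_, hx0, hy0, ?_⟩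
    · intro heq
      subst heq
      have hA := hφ' x0 hxb
      have hq := norm_bound_aux hc.1 (lt_of_le_of_lt hx0 hρ) (by positivity) (hb x0 hxb)
      have hD : deriv φ x0 + c * (deriv φ x0 + x0 * deriv (deriv φ) x0) ≠ 0 := by
        intro h
        have h1 : (c : ℂ) * (x0 * (deriv (deriv φ) x0 / deriv φ x0)) = -((1 + c : ℝ) : ℂ) := by
          push_cast
          field_simp
          linear_combination h
        have h2 := congrArg norm h1
        rw [norm_mul, norm_neg, Complex.norm_real, Complex.norm_real, Real.norm_of_nonneg hc.1,
          Real.norm_of_nonneg (by linarith [hc.1])] at h2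
        linarith
      obtain ⟨η, hη, hloc⟩ := local_inj (hd x0 hxb) (hdk x0 hxb) c hD
      have ev := ((hcl.eventually (Metric.ball_mem_nhds c hη)).and
        (hxl.eventually (Metric.ball_mem_nhds x0 hη))).and
        (hyl.eventually (Metric.ball_mem_nhds x0 hη))
      obtain ⟨n, ⟨h1, h2⟩, h3⟩ := ev.exists
      exact hxy (ψ n) (hloc (cs (ψ n)) h1 _ h2 _ h3 (he _))
    · refine tendsto_nhds_unique lx (ly.congr fun n => ?_)
      exact (he (ψ n)).symm
  have hsub : Set.Icc 0 T ⊆ S := by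
    refine hclosed.Icc_subset_of_forall_exists_gt ⟨a, b, hne, by simpa using haρ,
      by simpa using hbρ, by simpa using hab⟩ ?_
    rintro c ⟨⟨x, y, hxy, hx, hy, he⟩, hc⟩ u hu
    obtain ⟨X, hX0, hXc, hX⟩ := step_aux hφ hφ' hb hρ hc.1 hx
    obtain ⟨Y, hY0, hYc, hY⟩ := step_aux hφ hφ' hb hρ hc.1 hy
    have hne' : ∀ᶠ t in nhds c, X t ≠ Y t :=
      ((hXc.sub hYc).eventually_ne (by
        simpa [hX0, hY0, sub_eq_zero] using hxy)).mono fun t ht => sub_ne_zero.1 ht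
    obtain ⟨t, ⟨⟨h1, h2⟩, h3⟩, h4⟩ := (((hX.and hY).and (nhdsWithin_le_nhds hne')).and
      (Ioc_mem_nhdsGT hu)).exists
    exact ⟨t, ⟨X t, Y t, h3, h1.2, h2.2, h1.1.trans (he.trans h2.1.symm)⟩, h4⟩
  exact hTS (hsub ⟨hT, le_rfl⟩)

lemma exists_log {g : ℂ → ℂ} (hg : DifferentiableOn ℂ g (Metric.ball (0 : ℂ) 1))
    (hg0 : ∀ z ∈ Metric.ball (0 : ℂ) 1, g z ≠ 0) :
    ∃ G : ℂ → ℂ, ∀ z ∈ Metric.ball (0 : ℂ) 1,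
      HasDerivAt G (deriv g z / g z) z ∧ Complex.exp (G z) = g z := by
  have hq : DifferentiableOn ℂ (fun z => deriv g z / g z) (Metric.ball (0 : ℂ) 1) :=
    (hg.deriv Metric.isOpen_ball).fun_div hg hg0
  obtain ⟨G, hG0, hG⟩ := hq.isExactOn_ball.with_val_at 0 (Complex.log (g 0))
  have h00 : (0 : ℂ) ∈ Metric.ball (0 : ℂ) 1 := by simp
  have hder : ∀ z ∈ Metric.ball (0 : ℂ) 1,
      HasDerivAt (fun z => g z * Complex.exp (-G z)) 0 z := by
    intro z hz
    have h1 := (hg.differentiableAt (Metric.isOpen_ball.mem_nhds hz)).hasDerivAt.fun_mul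
      (hG z hz).fun_neg.cexp
    refine h1.congr_deriv ?_
    have := mul_div_cancel₀ (deriv g z) (hg0 z hz)
    linear_combination (-Complex.exp (-G z)) * this
  refine ⟨G, fun z hz => ⟨hG z hz, ?_⟩⟩
  have hc := Metric.isOpen_ball.is_const_of_deriv_eq_zero
    (convex_ball (0 : ℂ) 1).isPreconnected
    (fun z hz => (hder z hz).differentiableAt.differentiableWithinAt)
    (fun z hz => (hder z hz).deriv) hz h00
  simp only [hG0] at hc
  rw [Complex.exp_neg, Complex.exp_neg, Complex.exp_log (hg0 0 h00),
    mul_inv_cancel₀ (hg0 0 h00)] at hc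
  have he := Complex.exp_ne_zero (G z)
  field_simp at hc
  exact hc.symm

lemma factor_norm {l w : ℂ} (hl : ‖l‖ = 1) (hw : ‖w‖ < 1) (hne : 1 + l * w ≠ 0) :
    ‖(starRingEnd ℂ) w / (1 - (‖w‖ : ℂ) ^ 2) + l / (1 + l * w)‖ = 1 / (1 - ‖w‖ ^ 2) := by
  have hp : 0 < 1 - ‖w‖ ^ 2 := by nlinarith [norm_nonneg w]
  have hp' : (1 - (‖w‖ : ℂ) ^ 2) ≠ 0 := by exact_mod_cast hp.ne'
  have h1 : (starRingEnd ℂ) w * w = (‖w‖ : ℂ) ^ 2 := Complex.conj_mul' w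
  have h2 : (starRingEnd ℂ) l * l = 1 := by rw [Complex.conj_mul', hl]; simp
  have e : (starRingEnd ℂ) w / (1 - (‖w‖ : ℂ) ^ 2) + l / (1 + l * w) =
      (l * (starRingEnd ℂ) (1 + l * w)) / (((1 - ‖w‖ ^ 2 : ℝ) : ℂ) * (1 + l * w)) := by
    push_cast
    rw [div_add_div _ _ hp' hne]
    congr 1
    simp only [map_add, map_mul, map_one]
    linear_combination l * h1 - (starRingEnd ℂ) w * h2
  rw [e, norm_div, norm_mul, norm_mul, hl, Complex.norm_conj, Complex.norm_real,
    Real.norm_of_nonneg hp.le]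
  have := norm_ne_zero_iff.2 hne
  field_simp


open Complex

theorem becker_criterion_logharmonic
    (h g : ℂ → ℂ)
    (hh : DifferentiableOn ℂ h (Metric.ball (0 : ℂ) 1))
    (hg : DifferentiableOn ℂ g (Metric.ball (0 : ℂ) 1))
    (hh0 : ∀ z ∈ Metric.ball (0 : ℂ) 1, h z ≠ 0)
    (hg0 : ∀ z ∈ Metric.ball (0 : ℂ) 1, g z ≠ 0)
    (hh' : ∀ z ∈ Metric.ball (0 : ℂ) 1, deriv h z ≠ 0)
    (hω : ∀ z ∈ Metric.ball (0 : ℂ) 1, ‖omegaOf h g z‖ < 1)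
    (hbound : ∀ z ∈ Metric.ball (0 : ℂ) 1,
      ‖z * preSch h g z‖ +
        (1 + ‖omegaOf h g z‖) * ‖z * (deriv h z / h z)‖ +
        ‖z * deriv (omegaOf h g) z‖ / (1 - ‖omegaOf h g z‖ ^ 2) ≤
      1 / (1 - ‖z‖ ^ 2)) :
    Set.InjOn (fun z => h z * (starRingEnd ℂ) (g z)) (Metric.ball (0 : ℂ) 1) := by
  intro z1 hz1 z2 hz2 heq
  obtain ⟨G, hG⟩ := exists_log hg hg0
  obtain ⟨l, hl, hlM⟩ : ∃ l : ℂ, ‖l‖ = 1 ∧ l * (G z1 - G z2) = (starRingEnd ℂ) (G z1 - G z2) := by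
    by_cases h : G z1 - G z2 = 0
    · exact ⟨1, by simp, by simp [h]⟩
    · refine ⟨(starRingEnd ℂ) (G z1 - G z2) / (G z1 - G z2), ?_, div_mul_cancel₀ _ h⟩
      rw [norm_div, Complex.norm_conj, div_self (norm_ne_zero_iff.2 h)]
  set ω := omegaOf h g with hωd
  have hop : IsOpen (Metric.ball (0 : ℂ) 1) := Metric.isOpen_ball
  have hωdiff : DifferentiableOn ℂ ω (Metric.ball (0 : ℂ) 1) :=
    ((hg.deriv hop).fun_mul hh).fun_div (hg.fun_mul (hh.deriv hop))
      (fun z hz => mul_ne_zero (hg0 z hz) (hh' z hz))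
  have hGω : ∀ z ∈ Metric.ball (0 : ℂ) 1, deriv g z / g z = ω z * deriv h z / h z := by
    intro z hz
    have h1 := hg0 z hz
    have h2 := hh0 z hz
    have h3 := hh' z hz
    simp only [hωd, omegaOf]
    field_simp
  have hne : ∀ z ∈ Metric.ball (0 : ℂ) 1, 1 + l * ω z ≠ 0 := by
    intro z hz h
    have h1 : l * ω z = -1 := by linear_combination h
    have h2 := congrArg norm h1
    rw [norm_mul, hl, norm_neg, norm_one, one_mul] at h2
    linarith [hω z hz]
  have hhd : ∀ z ∈ Metric.ball (0 : ℂ) 1, HasDerivAt h (deriv h z) z := fun z hz =>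
    (hh.differentiableAt (hop.mem_nhds hz)).hasDerivAt
  have hhdd : ∀ z ∈ Metric.ball (0 : ℂ) 1, HasDerivAt (deriv h) (deriv (deriv h) z) z :=
    fun z hz => ((hh.deriv hop).differentiableAt (hop.mem_nhds hz)).hasDerivAt
  have hωdd : ∀ z ∈ Metric.ball (0 : ℂ) 1, HasDerivAt ω (deriv ω z) z :=
    fun z hz => (hωdiff.differentiableAt (hop.mem_nhds hz)).hasDerivAt
  have hE : ∀ z ∈ Metric.ball (0 : ℂ) 1, HasDerivAt (fun z => Complex.exp (l * G z))
      (Complex.exp (l * G z) * (l * (ω z * deriv h z / h z))) z := fun z hz => by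
    rw [← hGω z hz]
    exact ((hG z hz).1.const_mul l).cexp
  let φ : ℂ → ℂ := fun z => h z * Complex.exp (l * G z)
  let φ1 : ℂ → ℂ := fun z => deriv h z * (1 + l * ω z) * Complex.exp (l * G z)
  have hφd : ∀ z ∈ Metric.ball (0 : ℂ) 1, HasDerivAt φ (φ1 z) z := by
    intro z hz
    refine ((hhd z hz).fun_mul (hE z hz)).congr_deriv ?_
    have h2 := hh0 z hz
    simp only [φ1]
    field_simp
  have hφ1 : ∀ z ∈ Metric.ball (0 : ℂ) 1, deriv φ z = φ1 z := fun z hz => (hφd z hz).deriv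
  have hφ2 : ∀ z ∈ Metric.ball (0 : ℂ) 1, deriv (deriv φ) z = φ1 z *
      (deriv (deriv h) z / deriv h z + l * deriv ω z / (1 + l * ω z)
        + l * (ω z * deriv h z / h z)) := by
    intro z hz
    have hev : deriv φ =ᶠ[nhds z] φ1 := by
      filter_upwards [hop.mem_nhds hz] with w hw using hφ1 w hw
    rw [hev.deriv_eq]
    have := ((hhdd z hz).fun_mul (((hωdd z hz).const_mul l).const_add 1)).fun_mul (hE z hz)
    rw [show φ1 = fun z => deriv h z * (1 + l * ω z) * Complex.exp (l * G z) from rfl, this.deriv]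
    have h2 := hh0 z hz
    have h3 := hh' z hz
    have h4 := hne z hz
    field_simp
  have hφ10 : ∀ z ∈ Metric.ball (0 : ℂ) 1, φ1 z ≠ 0 := fun z hz =>
    mul_ne_zero (mul_ne_zero (hh' z hz) (hne z hz)) (Complex.exp_ne_zero _)
  have hinj : Set.InjOn φ (Metric.ball 0 1) := by
    refine becker_analytic
      (fun z hz => (hφd z hz).differentiableAt.differentiableWithinAt)
      (fun z hz => by rw [hφ1 z hz]; exact hφ10 z hz) ?_
    intro z hz
    refine le_trans ?_ (hbound z hz)
    rw [hφ2 z hz, hφ1 z hz, mul_div_cancel_left₀ _ (hφ10 z hz)]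
    have hsplit : z * (deriv (deriv h) z / deriv h z + l * deriv ω z / (1 + l * ω z)
        + l * (ω z * deriv h z / h z)) = z * preSch h g z
        + ((l - 1) * ω z) * (z * (deriv h z / h z))
        + (z * deriv ω z) * ((starRingEnd ℂ) (ω z) / (1 - (‖ω z‖ : ℂ) ^ 2)
          + l / (1 + l * ω z)) := by
      unfold preSch
      ring
    rw [hsplit]
    refine (norm_add_le _ _).trans (add_le_add ((norm_add_le _ _).trans
      (add_le_add le_rfl ?_)) ?_)
    · rw [norm_mul]
      gcongr
      rw [norm_mul]
      have h1 : ‖l - 1‖ ≤ 2 := by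
        refine (norm_sub_le _ _).trans ?_
        rw [hl, norm_one]; norm_num
      have h2 := hω z hz
      nlinarith [norm_nonneg (ω z)]
    · rw [norm_mul, factor_norm hl (hω z hz) (hne z hz), mul_one_div]
  apply hinj hz1 hz2
  simp only at heq
  rw [← (hG z1 hz1).2, ← (hG z2 hz2).2, ← Complex.exp_conj, ← Complex.exp_conj] at heq
  have e1 : l * G z1 = (starRingEnd ℂ) (G z1) + (l * G z2 - (starRingEnd ℂ) (G z2)) := by
    rw [map_sub] at hlM
    linear_combination hlM
  have e2 : l * G z2 = (starRingEnd ℂ) (G z2) + (l * G z2 - (starRingEnd ℂ) (G z2)) := by ring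
  change h z1 * Complex.exp (l * G z1) = h z2 * Complex.exp (l * G z2)
  rw [e1, e2, Complex.exp_add, Complex.exp_add, ← mul_assoc, ← mul_assoc, heq]
  simp
end

section
/- Ahlfors-type univalence criterion for logharmonic mappings: let f = h·conj(g) : 𝔻 → ℂ be a nonvanishing sense-preserving logharmonic mapping with dilatation ω, and let c ∈ ℂ with |c| ≤ 1, c ≠ −1. If for all z ∈ 𝔻, |(1−|z|²)·z·P_f(z) + c|z|²| + (1+|ω(z)|)·|(1−|z|²)·z·h'(z)/h(z)| + |z·ω'(z)|(1−|z|²)/(1−|ω(z)|²) ≤ 1, then f is univalent in 𝔻. -/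
open Complex

lemma strict_inj {F : ℂ × ℂ → ℂ} {A B : ℂ} {p₀ : ℂ × ℂ} (hB : B ≠ 0)
    (hF : HasStrictFDerivAt F (A • ContinuousLinearMap.fst ℂ ℂ ℂ +
      B • ContinuousLinearMap.snd ℂ ℂ ℂ) p₀) :
    ∀ᶠ p in nhds (p₀, p₀), F p.1 = F p.2 → p.1.1 = p.2.1 → p.1.2 = p.2.2 := by
  have h1 := hF.isLittleO.def (c := ‖B‖ / 2) (by positivity)
  filter_upwards [h1] with p hp hFp hp1
  obtain ⟨⟨s, u⟩, ⟨s', v⟩⟩ := p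
  simp only at hp hFp hp1 ⊢
  subst hp1
  have e : ‖((s, u) : ℂ × ℂ) - (s, v)‖ = ‖u - v‖ := by
    simp [Prod.norm_def]
  rw [e, hFp] at hp
  simp at hp
  by_contra hne
  have h2 : 0 < ‖B‖ := norm_pos_iff.mpr hB
  have h3 : 0 < ‖u - v‖ := norm_pos_iff.mpr (sub_ne_zero.mpr hne)
  nlinarith [mul_pos h2 h3]

lemma implicit_curve {F : ℂ × ℂ → ℂ} {A B : ℂ} {t₀ : ℝ} {a : ℂ} (hB : B ≠ 0)
    (hF : HasStrictFDerivAt F (A • ContinuousLinearMap.fst ℂ ℂ ℂ +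
      B • ContinuousLinearMap.snd ℂ ℂ ℂ) ((t₀ : ℂ), a)) :
    ∃ ψ : ℝ → ℂ, ψ t₀ = a ∧ HasDerivAt ψ (-A / B) t₀ ∧
      ∀ᶠ t : ℝ in nhds t₀, F ((t : ℂ), ψ t) = F ((t₀ : ℂ), a) := by
  have hinv : ((A • ContinuousLinearMap.fst ℂ ℂ ℂ +
      B • ContinuousLinearMap.snd ℂ ℂ ℂ) ∘L .inr ℂ ℂ ℂ).IsInvertible := by
    refine ⟨ContinuousLinearEquiv.unitsEquivAut ℂ (Units.mk0 B hB), ?_⟩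
    ext
    simp
  have hc : Filter.Tendsto (fun t : ℝ => (t : ℂ)) (nhds t₀) (nhds (t₀ : ℂ)) :=
    Complex.continuous_ofReal.tendsto t₀
  have hev := hF.eventually_apply_implicitFunctionOfProdDomain hinv
  have hd := hF.hasStrictFDerivAt_implicitFunctionOfProdDomain hinv
  have h0 := (hF.eventually_apply_eq_iff_implicitFunctionOfProdDomain hinv).self_of_nhds.mp rfl
  set ψ := hF.implicitFunctionOfProdDomain hinv
  refine ⟨fun t => ψ t, h0, ?_, hc.eventually hev⟩
  have h1 := hd.hasFDerivAt.hasDerivAt.comp_ofReal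
  convert h1 using 1
  simp only [_root_.neg_apply, ContinuousLinearMap.comp_apply]
  rw [neg_div]
  congr 1
  apply hinv.injective
  rw [hinv.self_apply_inverse] <;> simp
  field_simp

lemma M_strict {φ d : ℂ → ℂ} {e κ a t : ℂ} (h1 : HasStrictDerivAt φ (d a) a)
    (h2 : HasStrictDerivAt d e a) :
    HasStrictFDerivAt (fun p : ℂ × ℂ => φ p.2 + κ * (p.1 - 1) * (p.2 * d p.2))
     ((κ * (a * d a)) • ContinuousLinearMap.fst ℂ ℂ ℂ +
      (d a + κ * (t - 1) * (d a + a * e)) • ContinuousLinearMap.snd ℂ ℂ ℂ) (t, a) := by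
  have s2 : HasStrictFDerivAt (fun p : ℂ × ℂ => p.2) (ContinuousLinearMap.snd ℂ ℂ ℂ) (t, a) :=
    hasStrictFDerivAt_snd
  have s1 : HasStrictFDerivAt (fun p : ℂ × ℂ => p.1) (ContinuousLinearMap.fst ℂ ℂ ℂ) (t, a) :=
    hasStrictFDerivAt_fst
  have a1 := HasStrictDerivAt.comp_hasStrictFDerivAt (h₂ := φ) (t, a) (by exact h1) s2
  have a2 := HasStrictDerivAt.comp_hasStrictFDerivAt (h₂ := d) (t, a) (by exact h2) s2
  have := a1.add (((s1.sub_const 1).const_mul κ).mul (s2.mul a2))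
  refine HasStrictFDerivAt.congr_fderiv (by exact this) ?_
  ext <;> simp <;> ring

lemma N_strict {φ d : ℂ → ℂ} {e : ℂ} (h1 : HasStrictDerivAt φ (d 0) 0)
    (h2 : HasStrictDerivAt d e 0) :
    HasStrictFDerivAt (fun p : ℂ × ℂ => p.1 * φ p.2 + p.2 * d p.2)
     ((φ 0) • ContinuousLinearMap.fst ℂ ℂ ℂ +
      (d 0) • ContinuousLinearMap.snd ℂ ℂ ℂ) (0, 0) := by
  have s2 : HasStrictFDerivAt (fun p : ℂ × ℂ => p.2) (ContinuousLinearMap.snd ℂ ℂ ℂ) ((0:ℂ), (0:ℂ)) :=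
    hasStrictFDerivAt_snd
  have s1 : HasStrictFDerivAt (fun p : ℂ × ℂ => p.1) (ContinuousLinearMap.fst ℂ ℂ ℂ) ((0:ℂ), (0:ℂ)) :=
    hasStrictFDerivAt_fst
  have a1 := HasStrictDerivAt.comp_hasStrictFDerivAt (h₂ := φ) ((0:ℂ), (0:ℂ)) (by exact h1) s2
  have a2 := HasStrictDerivAt.comp_hasStrictFDerivAt (h₂ := d) ((0:ℂ), (0:ℂ)) (by exact h2) s2
  have := (s1.mul a1).add (s2.mul a2)
  refine HasStrictFDerivAt.congr_fderiv (by exact this) ?_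
  ext <;> simp

/-- norm decreasing -/
lemma curve_stays {ψ : ℝ → ℂ} {t₀ r : ℝ} {a X : ℂ} (ht : 0 < t₀) (h0 : ψ t₀ = a)
    (hd : HasDerivAt ψ (-a / (t₀ * X)) t₀) (ha : a ≠ 0) (hX : ‖X - 1‖ < 1)
    (hr : t₀ * ‖a‖ ^ 2 = r) : ∀ᶠ t in nhdsWithin t₀ (Set.Ioi t₀), t * ‖ψ t‖ ^ 2 ≤ r := by
  have hX0 : X ≠ 0 := by
    rintro rfl
    simp at hX
  have h1 := (hasDerivAt_id t₀).mul hd.norm_sq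
  have hneg : 1 * ‖ψ t₀‖ ^ 2 + t₀ * (2 * inner ℝ (ψ t₀) (-a / (t₀ * X))) < 0 := by
    have e1 : inner ℝ a (-a / (t₀ * X)) = - (‖a‖ ^ 2 * X.re / (t₀ * Complex.normSq X)) := by
      have : -a / (t₀ * X) = ((-1 / (t₀ * Complex.normSq X) : ℝ) : ℂ) * (a * (starRingEnd ℂ) X) := by
        have hn : (Complex.normSq X : ℂ) = X * (starRingEnd ℂ) X := (Complex.mul_conj X).symm
        have ht' : (t₀ : ℂ) ≠ 0 := by exact_mod_cast ht.ne'
        have hcx : (starRingEnd ℂ) X ≠ 0 := by simpa using hX0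
        push_cast
        rw [hn]
        field_simp
      rw [this, Complex.inner, ← Complex.normSq_eq_norm_sq, Complex.normSq_apply a]
      simp [-Complex.ofReal_div, -Complex.ofReal_neg, -Complex.ofReal_mul]
      ring
    rw [h0, e1]
    have hns : 0 < Complex.normSq X := Complex.normSq_pos.mpr hX0
    have hlt : Complex.normSq X < 2 * X.re := by
      have : ‖X - 1‖ ^ 2 < 1 := by nlinarith [norm_nonneg (X - 1)]
      rw [← Complex.normSq_eq_norm_sq, Complex.normSq_apply] at this
      rw [Complex.normSq_apply]
      simp at this
      nlinarith
    have ha2 : 0 < ‖a‖ ^ 2 := by positivity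
    have : 1 * ‖a‖ ^ 2 + t₀ * (2 * -(‖a‖ ^ 2 * X.re / (t₀ * normSq X)))
      = ‖a‖ ^ 2 * ((normSq X - 2 * X.re) / normSq X) := by field_simp; ring
    rw [this]
    exact mul_neg_of_pos_of_neg ha2 (div_neg_of_neg_of_pos (by linarith) hns)
  have h2 := (hasDerivAt_iff_tendsto_slope.mp h1).mono_left
    (nhdsWithin_mono t₀ (s := Set.Ioi t₀) (fun x hx => ne_of_gt hx))
  have h3 := h2.eventually (gt_mem_nhds hneg)
  filter_upwards [h3, self_mem_nhdsWithin] with t ht3 htt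
  rw [slope_def_field] at ht3
  have htt' : 0 < t - t₀ := sub_pos.mpr htt
  rw [div_neg_iff] at ht3
  have hv : t₀ * ‖ψ t₀‖ ^ 2 = r := by rw [h0, hr]
  simp only [Pi.mul_apply, id] at ht3
  rcases ht3 with h | h <;> linarith [h.1, h.2]

lemma ahl_strict {q : ℂ → ℂ} {c : ℂ} (hq : DifferentiableOn ℂ q (Metric.ball 0 1))
    (hq0 : q 0 = 0) (hc : ‖c‖ ≤ 1)
    (hb : ∀ z ∈ Metric.ball (0 : ℂ) 1,
      ‖(1 - (‖z‖ : ℂ) ^ 2) * q z + c * (‖z‖ : ℂ) ^ 2‖ ≤ 1)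
    {t : ℝ} (ht : 1 < t) {u : ℂ} (hu : t * ‖u‖ ^ 2 < 1) :
    ‖c + (t - 1) * q u‖ < t := by
  have ht0 : 0 < t := by linarith
  set R : ℝ := (Real.sqrt t)⁻¹ with hR
  have hsq : 1 < Real.sqrt t := by
    rw [Real.lt_sqrt] <;> simpa using ht
  have hR0 : 0 < R := by positivity
  have hR1 : R < 1 := inv_lt_one_of_one_lt₀ hsq
  have hR2 : t * R ^ 2 = 1 := by
    rw [hR, inv_pow, Real.sq_sqrt ht0.le]
    field_simp
  have huR : ‖u‖ < R := by
    have : ‖u‖ ^ 2 < R ^ 2 := by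
      by_contra hcon
      push Not at hcon
      nlinarith
    exact lt_of_pow_lt_pow_left₀ 2 hR0.le this
  have hsub : Metric.closedBall (0 : ℂ) R ⊆ Metric.ball 0 1 := Metric.closedBall_subset_ball hR1
  have hd : DifferentiableOn ℂ (fun u => c + ((t : ℂ) - 1) * q u) (Metric.ball 0 1) :=
    (hq.const_mul _).const_add _
  have hfr : ∀ z ∈ frontier (Metric.ball (0 : ℂ) R), ‖c + ((t : ℂ) - 1) * q z‖ ≤ t := by
    intro z hz
    rw [frontier_ball _ hR0.ne'] at hz
    have hz' : ‖z‖ = R := by simpa using hz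
    have h1 := hb z (hsub (Metric.sphere_subset_closedBall hz))
    have h2 : c + ((t : ℂ) - 1) * q z = t * ((1 - (‖z‖ : ℂ) ^ 2) * q z + c * (‖z‖ : ℂ) ^ 2) := by
      have : (t : ℂ) * (‖z‖ : ℂ) ^ 2 = 1 := by rw [hz']; exact_mod_cast hR2
      linear_combination (q z - c) * this
    rw [h2, norm_mul, Complex.norm_real, Real.norm_of_nonneg ht0.le]
    nlinarith
  have hle : ∀ z ∈ Metric.ball (0 : ℂ) R, ‖c + ((t : ℂ) - 1) * q z‖ ≤ t := by
    intro z hz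
    refine Complex.norm_le_of_forall_mem_frontier_norm_le Metric.isBounded_ball
      (DifferentiableOn.diffContOnCl ?_) hfr (subset_closure hz)
    exact hd.mono (Metric.closure_ball_subset_closedBall.trans hsub)
  have huB : u ∈ Metric.ball (0 : ℂ) R := by simpa using huR
  refine lt_of_le_of_ne (hle u huB) fun heq => ?_
  have := Complex.norm_eqOn_of_isPreconnected_of_isMaxOn
    (f := fun u => c + ((t : ℂ) - 1) * q u) (convex_ball (0 : ℂ) R).isPreconnected
    Metric.isOpen_ball (hd.mono (Metric.ball_subset_closedBall.trans hsub)) huB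
    (fun z hz => by simpa [heq] using hle z hz)
  have h0 := this (Metric.mem_ball_self hR0)
  simp [hq0, heq] at h0
  linarith

theorem ahlfors_analytic {φ d e : ℂ → ℂ} {c : ℂ} (hc : ‖c‖ ≤ 1) (hc' : c ≠ -1)
    (h1 : ∀ z ∈ Metric.ball (0 : ℂ) 1, HasDerivAt φ (d z) z)
    (h2 : ∀ z ∈ Metric.ball (0 : ℂ) 1, HasDerivAt d (e z) z)
    (h3 : ∀ z ∈ Metric.ball (0 : ℂ) 1, d z ≠ 0)
    (hb : ∀ z ∈ Metric.ball (0 : ℂ) 1,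
      ‖(1 - (‖z‖ : ℂ) ^ 2) * z * (e z / d z) + c * (‖z‖ : ℂ) ^ 2‖ ≤ 1) :
    Set.InjOn φ (Metric.ball (0 : ℂ) 1) := by
  have hop : IsOpen (Metric.ball (0 : ℂ) 1) := Metric.isOpen_ball
  have hc1 : 1 + c ≠ 0 := fun h => hc' (by linear_combination h)
  have strict : ∀ (f f' : ℂ → ℂ), (∀ z ∈ Metric.ball (0 : ℂ) 1, HasDerivAt f (f' z) z) →
      ∀ z ∈ Metric.ball (0 : ℂ) 1, HasStrictDerivAt f (f' z) z := by
    intro f f' hf z hz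
    have hdo : DifferentiableOn ℂ f (Metric.ball 0 1) :=
      fun w hw => (hf w hw).differentiableAt.differentiableWithinAt
    have := (hdo.analyticAt (hop.mem_nhds hz)).hasStrictDerivAt
    rwa [(hf z hz).deriv] at this
  have ddiff : DifferentiableOn ℂ d (Metric.ball 0 1) :=
    fun w hw => (h2 w hw).differentiableAt.differentiableWithinAt
  have ediff : DifferentiableOn ℂ e (Metric.ball 0 1) :=
    (ddiff.deriv hop).congr fun w hw => (h2 w hw).deriv.symm
  set q : ℂ → ℂ := fun z => z * (e z / d z) with hq
  have hqd : DifferentiableOn ℂ q (Metric.ball 0 1) :=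
    differentiableOn_id.mul (ediff.div ddiff h3)
  have hqb : ∀ z ∈ Metric.ball (0 : ℂ) 1,
      ‖(1 - (‖z‖ : ℂ) ^ 2) * q z + c * (‖z‖ : ℂ) ^ 2‖ ≤ 1 := by
    intro z hz
    simpa [hq, mul_assoc] using hb z hz
  set κ : ℂ := (1 + c)⁻¹ with hκ
  have hκ0 : κ ≠ 0 := inv_ne_zero hc1
  set M : ℂ × ℂ → ℂ := fun p => φ p.2 + κ * (p.1 - 1) * (p.2 * d p.2) with hM
  have hMs : ∀ (t : ℝ), ∀ a ∈ Metric.ball (0 : ℂ) 1, HasStrictFDerivAt M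
      ((κ * (a * d a)) • ContinuousLinearMap.fst ℂ ℂ ℂ +
      (d a + κ * ((t : ℂ) - 1) * (d a + a * e a)) • ContinuousLinearMap.snd ℂ ℂ ℂ) ((t : ℂ), a) :=
    fun t a ha => M_strict (strict _ _ h1 a ha) (strict _ _ h2 a ha)
  -- value of the derivative
  have hBval : ∀ (t : ℝ), 0 < t → ∀ a ∈ Metric.ball (0 : ℂ) 1,
      d a + κ * ((t : ℂ) - 1) * (d a + a * e a) =
        d a * κ * (t * (1 + (c + (t - 1) * q a) / t)) := by
    intro t ht a ha
    have h30 := h3 a ha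
    have ht' : (t : ℂ) ≠ 0 := by exact_mod_cast ht.ne'
    have hκc : κ * (1 + c) = 1 := inv_mul_cancel₀ hc1
    have hqa : d a * q a = a * e a := by simp only [hq]; field_simp
    have : (t : ℂ) * (1 + (c + (t - 1) * q a) / t) = t + c + (t - 1) * q a := by field_simp; ring
    rw [this]
    linear_combination (-d a) * hκc - κ * (t - 1) * hqa
  have hX : ∀ (t : ℝ), 1 < t → ∀ a : ℂ, t * ‖a‖ ^ 2 < 1 →
      ‖(1 + (c + (t - 1) * q a) / t) - 1‖ < 1 := by
    intro t ht a ha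
    have := ahl_strict hqd (by simp [hq]) hc hqb ht ha
    rw [add_sub_cancel_left, norm_div, Complex.norm_real, Real.norm_of_nonneg (by linarith),
      div_lt_one (by linarith)]
    exact this
  have hX0 : ∀ (t : ℝ), 1 ≤ t → ∀ a : ℂ, t * ‖a‖ ^ 2 < 1 →
      (1 + (c + (t - 1) * q a) / t) ≠ 0 := by
    intro t ht a ha h0
    rcases ht.eq_or_lt with rfl | ht
    · apply hc1; simpa using h0
    · have := hX t ht a ha
      rw [h0] at this
      simp at this
  have hball : ∀ (t : ℝ), 1 ≤ t → ∀ a : ℂ, t * ‖a‖ ^ 2 < 1 → a ∈ Metric.ball (0 : ℂ) 1 := by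
    intro t ht a ha
    simp only [Metric.mem_ball, dist_zero_right]
    by_contra hcon
    push Not at hcon
    nlinarith [norm_nonneg a]
  have hB0 : ∀ (t : ℝ), 1 ≤ t → ∀ a : ℂ, t * ‖a‖ ^ 2 < 1 →
      d a + κ * ((t : ℂ) - 1) * (d a + a * e a) ≠ 0 := by
    intro t ht a ha
    have hab := hball t ht a ha
    rw [hBval t (by linarith) a hab]
    have ht' : (t : ℂ) ≠ 0 := by
      have : t ≠ 0 := by linarith
      exact_mod_cast this
    exact mul_ne_zero (mul_ne_zero (h3 a hab) hκ0) (mul_ne_zero ht' (hX0 t ht a ha))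
  -- advancing
  have adv : ∀ (r : ℝ), 0 < r → r < 1 → ∀ (t₀ : ℝ), 1 ≤ t₀ → ∀ a : ℂ,
      (t₀ * ‖a‖ ^ 2 < r ∨ (1 < t₀ ∧ t₀ * ‖a‖ ^ 2 = r)) →
      ∃ ψ : ℝ → ℂ, ψ t₀ = a ∧ ContinuousAt ψ t₀ ∧
        ∀ᶠ t : ℝ in nhdsWithin t₀ (Set.Ioi t₀), M ((t : ℂ), ψ t) = M ((t₀ : ℂ), a) ∧
          t * ‖ψ t‖ ^ 2 ≤ r := by
    intro r hr0 hr1 t₀ ht₀ a ha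
    have ha1 : t₀ * ‖a‖ ^ 2 < 1 := by rcases ha with h | ⟨_, h⟩ <;> linarith
    have hab := hball t₀ ht₀ a ha1
    obtain ⟨ψ, e0, e1, e2⟩ := implicit_curve (hB0 t₀ ht₀ a ha1) (hMs t₀ a hab)
    refine ⟨ψ, e0, e1.continuousAt, (e2.filter_mono nhdsWithin_le_nhds).and ?_⟩
    rcases ha with h | ⟨ht1, h⟩
    · have hcont : ContinuousAt (fun t => t * ‖ψ t‖ ^ 2) t₀ :=
        continuousAt_id.mul (e1.continuousAt.norm.pow 2)
      have hev : ∀ᶠ t in nhds t₀, t * ‖ψ t‖ ^ 2 < r :=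
        hcont.eventually (gt_mem_nhds (by simpa [e0] using h))
      filter_upwards [nhdsWithin_le_nhds hev] with t ht using ht.le
    · have hane : a ≠ 0 := by
        rintro rfl
        simp at h
        linarith
      refine curve_stays (X := 1 + (c + (t₀ - 1) * q a) / t₀) (by linarith) e0 ?_ hane
        (hX t₀ ht1 a ha1) h
      convert e1 using 1
      rw [hBval t₀ (by linarith) a hab]
      have := hX0 t₀ ht₀ a ha1
      have hd0 := h3 a hab
      have ht' : (t₀ : ℂ) ≠ 0 := by
        have : t₀ ≠ 0 := by linarith
        exact_mod_cast this
      generalize 1 + (c + (t₀ - 1) * q a) / (t₀ : ℂ) = X at *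
      field_simp
  -- main argument
  intro z1 hz1 z2 hz2 hφ
  by_contra hne
  simp only [Metric.mem_ball, dist_zero_right] at hz1 hz2
  obtain ⟨r, hr, hr1⟩ : ∃ r, max (max (‖z1‖ ^ 2) (‖z2‖ ^ 2)) 0 < r ∧ r < 1 := by
    apply exists_between
    simp only [max_lt_iff]
    refine ⟨⟨?_, ?_⟩, one_pos⟩ <;> nlinarith [norm_nonneg z1, norm_nonneg z2]
  simp only [max_lt_iff] at hr
  obtain ⟨⟨hr_1, hr_2⟩, hr0⟩ := hr
  have pair : ∀ t₀ : ℝ, 1 ≤ t₀ → ∀ a b : ℂ, a ≠ b →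
      (t₀ * ‖a‖ ^ 2 < r ∨ (1 < t₀ ∧ t₀ * ‖a‖ ^ 2 = r)) →
      (t₀ * ‖b‖ ^ 2 < r ∨ (1 < t₀ ∧ t₀ * ‖b‖ ^ 2 = r)) → M (t₀, a) = M (t₀, b) →
      ∃ t : ℝ, t₀ < t ∧ ∃ a b : ℂ, a ≠ b ∧ t * ‖a‖ ^ 2 ≤ r ∧ t * ‖b‖ ^ 2 ≤ r ∧
        M (t, a) = M (t, b) := by
    intro t₀ ht₀ a b hab ha hb hMab
    obtain ⟨ψ, p0, p1, p2⟩ := adv r hr0 hr1 t₀ ht₀ a ha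
    obtain ⟨χ, c0, c1, c2⟩ := adv r hr0 hr1 t₀ ht₀ b hb
    have hne' : ∀ᶠ t in nhdsWithin t₀ (Set.Ioi t₀), ψ t ≠ χ t := by
      have hs : ∀ᶠ t in nhds t₀, ψ t - χ t ≠ 0 :=
        (p1.sub c1).eventually_ne (by simpa [p0, c0] using sub_ne_zero.mpr hab)
      filter_upwards [nhdsWithin_le_nhds hs] with t ht using sub_ne_zero.mp ht
    obtain ⟨t, ⟨⟨hp1, hp2⟩, ⟨hc1, hc2⟩⟩, hn, ht⟩ :=
      ((p2.and c2).and (hne'.and self_mem_nhdsWithin)).exists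
    exact ⟨t, ht, ψ t, χ t, hn, hp2, hc2, by rw [hp1, hc1, hMab]⟩
  let S : Set ℝ := {t | 1 < t ∧ ∃ a b : ℂ, a ≠ b ∧ t * ‖a‖ ^ 2 ≤ r ∧ t * ‖b‖ ^ 2 ≤ r ∧
        M ((t : ℂ), a) = M ((t : ℂ), b)}
  have hS : S.Nonempty := by
    obtain ⟨t, ht, H⟩ := pair 1 le_rfl z1 z2 hne (Or.inl (by simpa using hr_1))
      (Or.inl (by simpa using hr_2)) (by simpa [hM] using hφ)
    exact ⟨t, ht, H⟩
  have h0B : (0 : ℂ) ∈ Metric.ball (0 : ℂ) 1 := by simp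
  have hSb : BddAbove S := by
    have hN := strict_inj (h3 0 h0B) (N_strict (strict _ _ h1 0 h0B) (strict _ _ h2 0 h0B))
    rw [Metric.eventually_nhds_iff] at hN
    obtain ⟨ε, hε, hN⟩ := hN
    by_contra hunb
    rw [not_bddAbove_iff] at hunb
    obtain ⟨t, ⟨ht1, a, b, hab, ha, hb, hMab⟩, ht⟩ := hunb (max (1 + ‖(1 + c)‖ / ε) (1 / ε ^ 2))
    rw [max_lt_iff] at ht
    have ht0 : 0 < t - 1 := by linarith
    set s : ℂ := (1 + c) / (t - 1) with hs
    have htc : (t : ℂ) - 1 ≠ 0 := by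
      have : t - 1 ≠ 0 := ht0.ne'
      exact_mod_cast this
    have hs' : ‖s‖ < ε := by
      have e1 : ‖(t : ℂ) - 1‖ = t - 1 := by
        rw [← Complex.ofReal_one, ← Complex.ofReal_sub, Complex.norm_real, Real.norm_of_nonneg ht0.le]
      rw [hs, norm_div, e1, div_lt_iff₀ ht0]
      have : ‖1 + c‖ / ε < t - 1 := by linarith [ht.1]
      rw [div_lt_iff₀ hε] at this
      linarith
    have hsmall : ∀ a : ℂ, t * ‖a‖ ^ 2 ≤ r → ‖a‖ < ε := by
      intro a ha
      have h5 := ht.2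
      rw [div_lt_iff₀ (by positivity)] at h5
      have : t * ‖a‖ ^ 2 < t * ε ^ 2 := by linarith
      have := lt_of_mul_lt_mul_left this (by linarith)
      exact lt_of_pow_lt_pow_left₀ 2 hε.le this
    refine hab (hN (y := ((s, a), (s, b))) ?_ ?_ rfl)
    · simp only [Prod.dist_eq, dist_zero_right, max_lt_iff]
      exact ⟨⟨hs', hsmall a ha⟩, ⟨hs', hsmall b hb⟩⟩
    · have key : ∀ a : ℂ, s * φ a + a * d a = s * M ((t : ℂ), a) := by
        intro a
        simp only [hM, hs, hκ]
        field_simp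
      simp only [key, hMab]
  obtain ⟨u, -, hu, huS⟩ := exists_seq_tendsto_sSup hS hSb
  set T := sSup S with hT
  have hT1 : 1 < T := by
    obtain ⟨t, ht⟩ := hS
    exact lt_of_lt_of_le ht.1 (le_csSup hSb ht)
  choose hu1 a b hab ha hb hMab using huS
  have hbd : ∀ t : ℝ, 1 < t → ∀ a : ℂ, t * ‖a‖ ^ 2 ≤ r → a ∈ Metric.closedBall (0 : ℂ) 1 := by
    intro t ht a ha
    exact Metric.ball_subset_closedBall (hball t ht.le a (by linarith))
  obtain ⟨⟨A, B⟩, -, σ, hσ, hlim⟩ :=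
    ((isCompact_closedBall (0 : ℂ) 1).prod (isCompact_closedBall (0 : ℂ) 1)).tendsto_subseq
      (x := fun n => (a n, b n)) (fun n => ⟨hbd _ (hu1 n) _ (ha n), hbd _ (hu1 n) _ (hb n)⟩)
  have hlA : Filter.Tendsto (fun n => a (σ n)) Filter.atTop (nhds A) :=
    (continuous_fst.tendsto _).comp hlim
  have hlB : Filter.Tendsto (fun n => b (σ n)) Filter.atTop (nhds B) :=
    (continuous_snd.tendsto _).comp hlim
  have hlu : Filter.Tendsto (fun n => u (σ n)) Filter.atTop (nhds T) := hu.comp hσ.tendsto_atTop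
  have hluc : Filter.Tendsto (fun n => (u (σ n) : ℂ)) Filter.atTop (nhds (T : ℂ)) :=
    (Complex.continuous_ofReal.tendsto T).comp hlu
  have hAr : T * ‖A‖ ^ 2 ≤ r :=
    le_of_tendsto (hlu.mul (hlA.norm.pow 2)) (Filter.Eventually.of_forall fun n => ha (σ n))
  have hBr : T * ‖B‖ ^ 2 ≤ r :=
    le_of_tendsto (hlu.mul (hlB.norm.pow 2)) (Filter.Eventually.of_forall fun n => hb (σ n))
  have hA1 : T * ‖A‖ ^ 2 < 1 := by linarith
  have hB1 : T * ‖B‖ ^ 2 < 1 := by linarith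
  have hsA := hMs T A (hball T hT1.le A hA1)
  have hsB := hMs T B (hball T hT1.le B hB1)
  have hpA : Filter.Tendsto (fun n => ((u (σ n) : ℂ), a (σ n))) Filter.atTop (nhds ((T : ℂ), A)) :=
    hluc.prodMk_nhds hlA
  have hpB : Filter.Tendsto (fun n => ((u (σ n) : ℂ), b (σ n))) Filter.atTop (nhds ((T : ℂ), B)) :=
    hluc.prodMk_nhds hlB
  by_cases hAB : A = B
  · subst hAB
    have hev := strict_inj (hB0 T hT1.le A hA1) hsA
    obtain ⟨n, hn⟩ := ((hpA.prodMk_nhds hpB).eventually hev).exists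
    exact hab (σ n) (hn (hMab (σ n)) rfl)
  · have hMAB : M ((T : ℂ), A) = M ((T : ℂ), B) :=
      tendsto_nhds_unique (hsA.continuousAt.tendsto.comp hpA)
        ((hsB.continuousAt.tendsto.comp hpB).congr fun n => (hMab (σ n)).symm)
    obtain ⟨t, ht, H⟩ := pair T hT1.le A B hAB
      (hAr.lt_or_eq.imp id fun h => ⟨hT1, h⟩) (hBr.lt_or_eq.imp id fun h => ⟨hT1, h⟩) hMAB
    exact absurd (le_csSup hSb (show t ∈ S from ⟨hT1.trans ht, H⟩)) (not_le.mpr ht)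

lemma log_prim {h : ℂ → ℂ} (hh : DifferentiableOn ℂ h (Metric.ball (0 : ℂ) 1))
    (hh0 : ∀ z ∈ Metric.ball (0 : ℂ) 1, h z ≠ 0) :
    ∃ H : ℂ → ℂ, (∀ z ∈ Metric.ball (0 : ℂ) 1, HasDerivAt H (deriv h z / h z) z) ∧
      ∀ z ∈ Metric.ball (0 : ℂ) 1, h z = exp (H z) := by
  have hop : IsOpen (Metric.ball (0 : ℂ) 1) := Metric.isOpen_ball
  have h0B : (0 : ℂ) ∈ Metric.ball (0 : ℂ) 1 := by simp
  obtain ⟨H, hH0, hH⟩ := (((hh.deriv hop).div hh hh0).isExactOn_ball).with_val_at 0 (log (h 0))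
  refine ⟨H, hH, fun z hz => ?_⟩
  have hd : ∀ w ∈ Metric.ball (0 : ℂ) 1, HasDerivAt (fun w => h w * exp (-H w)) 0 w := by
    intro w hw
    have e1 := (hh.differentiableAt (hop.mem_nhds hw)).hasDerivAt.mul (hH w hw).neg.cexp
    refine HasDerivAt.congr_deriv (by exact e1) ?_
    have := hh0 w hw
    simp only [Pi.neg_apply, Pi.div_apply]
    field_simp
    ring
  have := hop.is_const_of_deriv_eq_zero (convex_ball (0 : ℂ) 1).isPreconnected
    (fun w hw => (hd w hw).differentiableAt.differentiableWithinAt)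
    (fun w hw => (hd w hw).deriv) hz h0B
  simp only [hH0, exp_neg, exp_log (hh0 0 h0B)] at this
  rw [mul_inv_cancel₀ (hh0 0 h0B)] at this
  exact mul_inv_eq_one₀ (exp_ne_zero _) |>.mp this

lemma cond_of {z P L w w' c α β Q : ℂ} (hz : ‖z‖ < 1) (hw : ‖w‖ < 1)
    (hα : ‖α‖ ≤ 1 + ‖w‖) (hβ : ‖β‖ ≤ 1)
    (hQ : Q = P + α * L + β * w' / (1 - (‖w‖ : ℂ) ^ 2))
    (hb : ‖(1 - (‖z‖ : ℂ) ^ 2) * z * P + c * (‖z‖ : ℂ) ^ 2‖ +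
        (1 + ‖w‖) * ‖(1 - (‖z‖ : ℂ) ^ 2) * z * L‖ +
        ‖z * w'‖ * (1 - ‖z‖ ^ 2) / (1 - ‖w‖ ^ 2) ≤ 1) :
    ‖(1 - (‖z‖ : ℂ) ^ 2) * z * Q + c * (‖z‖ : ℂ) ^ 2‖ ≤ 1 := by
  have nw : ∀ x : ℝ, 0 ≤ x → x < 1 → ‖(1 - (x : ℂ) ^ 2)‖ = 1 - x ^ 2 := by
    intro x hx0 hx
    have : (1 - (x : ℂ) ^ 2) = ((1 - x ^ 2 : ℝ) : ℂ) := by push_cast; ring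
    rw [this, Complex.norm_real, Real.norm_of_nonneg]
    nlinarith
  have hzz := nw ‖z‖ (norm_nonneg _) hz
  have hww := nw ‖w‖ (norm_nonneg _) hw
  have hw1 : 0 < 1 - ‖w‖ ^ 2 := by nlinarith [norm_nonneg w]
  have hz1 : 0 < 1 - ‖z‖ ^ 2 := by nlinarith [norm_nonneg z]
  have e : (1 - (‖z‖ : ℂ) ^ 2) * z * Q + c * (‖z‖ : ℂ) ^ 2 =
      ((1 - (‖z‖ : ℂ) ^ 2) * z * P + c * (‖z‖ : ℂ) ^ 2) + α * ((1 - (‖z‖ : ℂ) ^ 2) * z * L) +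
      β * ((z * w') * (1 - (‖z‖ : ℂ) ^ 2) / (1 - (‖w‖ : ℂ) ^ 2)) := by
    rw [hQ]; ring
  rw [e]
  refine le_trans (norm_add₃_le) (le_trans ?_ hb)
  gcongr ?_ + ?_ + ?_
  · exact le_rfl
  · rw [norm_mul]
    gcongr
  · rw [norm_mul, norm_div, norm_mul (z * w'), hzz, hww]
    have : 0 ≤ ‖z * w'‖ * (1 - ‖z‖ ^ 2) / (1 - ‖w‖ ^ 2) := by positivity
    nlinarith

lemma norm_eps {ε w : ℂ} (hε : ‖ε‖ ≤ 1) (hw : ‖w‖ < 1) :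
    ‖(ε + (starRingEnd ℂ) w) / (1 + ε * w)‖ ≤ 1 := by
  rw [norm_div]
  refine div_le_one_of_le₀ ?_ (norm_nonneg _)
  rw [← sq_le_sq₀ (norm_nonneg _) (norm_nonneg _)]
  have h1 : 0 ≤ (1 - ‖ε‖ ^ 2) * (1 - ‖w‖ ^ 2) := by
    apply mul_nonneg <;> nlinarith [norm_nonneg w, norm_nonneg ε]
  simp only [← Complex.normSq_eq_norm_sq, Complex.normSq_apply] at h1 ⊢
  simp
  nlinarith

theorem ahlfors_criterion_logharmonic
    (h g : ℂ → ℂ)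
    (hh : DifferentiableOn ℂ h (Metric.ball (0 : ℂ) 1))
    (hg : DifferentiableOn ℂ g (Metric.ball (0 : ℂ) 1))
    (hh0 : ∀ z ∈ Metric.ball (0 : ℂ) 1, h z ≠ 0)
    (hg0 : ∀ z ∈ Metric.ball (0 : ℂ) 1, g z ≠ 0)
    (hh' : ∀ z ∈ Metric.ball (0 : ℂ) 1, deriv h z ≠ 0)
    (hω : ∀ z ∈ Metric.ball (0 : ℂ) 1, ‖omegaOf h g z‖ < 1)
    (c : ℂ) (hc : ‖c‖ ≤ 1) (hc' : c ≠ -1)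
    (hbound : ∀ z ∈ Metric.ball (0 : ℂ) 1,
      ‖(1 - (‖z‖ : ℂ) ^ 2) * z * preSch h g z + c * (‖z‖ : ℂ) ^ 2‖ +
        (1 + ‖omegaOf h g z‖) * ‖(1 - (‖z‖ : ℂ) ^ 2) * z * (deriv h z / h z)‖ +
        ‖z * deriv (omegaOf h g) z‖ * (1 - ‖z‖ ^ 2) / (1 - ‖omegaOf h g z‖ ^ 2) ≤
      1) :
    Set.InjOn (fun z => h z * (starRingEnd ℂ) (g z)) (Metric.ball (0 : ℂ) 1) := by
  have hop : IsOpen (Metric.ball (0 : ℂ) 1) := Metric.isOpen_ball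
  obtain ⟨H, hH, hHe⟩ := log_prim hh hh0
  obtain ⟨G, hG, hGe⟩ := log_prim hg hg0
  have hωd : DifferentiableOn ℂ (omegaOf h g) (Metric.ball 0 1) :=
    ((hg.deriv hop).mul hh).div (hg.mul (hh.deriv hop))
      (fun z hz => mul_ne_zero (hg0 z hz) (hh' z hz))
  have hωD : ∀ z ∈ Metric.ball (0 : ℂ) 1,
      HasDerivAt (omegaOf h g) (deriv (omegaOf h g) z) z :=
    fun z hz => (hωd.differentiableAt (hop.mem_nhds hz)).hasDerivAt
  have hLD : ∀ z ∈ Metric.ball (0 : ℂ) 1, HasDerivAt (fun z => deriv h z / h z)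
      ((deriv (deriv h) z * h z - deriv h z * deriv h z) / h z ^ 2) z :=
    fun z hz => ((hh.deriv hop).differentiableAt (hop.mem_nhds hz)).hasDerivAt.div
      (hh.differentiableAt (hop.mem_nhds hz)).hasDerivAt (hh0 z hz)
  have hden : ∀ z ∈ Metric.ball (0 : ℂ) 1, 1 - (‖omegaOf h g z‖ : ℂ) ^ 2 ≠ 0 := by
    intro z hz h0
    have : 1 - ‖omegaOf h g z‖ ^ 2 = 0 := by exact_mod_cast h0
    nlinarith [hω z hz, norm_nonneg (omegaOf h g z)]
  -- the linear combinations
  have key1 : ∀ ε : ℂ, ‖ε‖ ≤ 1 → Set.InjOn (fun z => H z + ε * G z) (Metric.ball (0 : ℂ) 1) := by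
    intro ε hε
    have hne : ∀ z ∈ Metric.ball (0 : ℂ) 1, 1 + ε * omegaOf h g z ≠ 0 := by
      intro z hz h0
      have h1 : ‖ε * omegaOf h g z‖ = 1 := by
        rw [show ε * omegaOf h g z = -1 by linear_combination h0]; simp
      rw [norm_mul] at h1
      nlinarith [hω z hz, norm_nonneg (omegaOf h g z), norm_nonneg ε]
    refine ahlfors_analytic (c := c) hc hc'
      (d := fun z => deriv h z / h z * (1 + ε * omegaOf h g z))
      (e := fun z => (deriv (deriv h) z * h z - deriv h z * deriv h z) / h z ^ 2 *
        (1 + ε * omegaOf h g z) + deriv h z / h z * (ε * deriv (omegaOf h g) z)) ?_ ?_ ?_ ?_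
    · intro z hz
      refine HasDerivAt.congr_deriv ((hH z hz).add ((hG z hz).const_mul ε)) ?_
      have a1 := hh0 z hz
      have a2 := hg0 z hz
      have a3 := hh' z hz
      simp only [omegaOf]
      field_simp
    · intro z hz
      exact (hLD z hz).mul (((hωD z hz).const_mul ε).const_add 1)
    · intro z hz
      exact mul_ne_zero (div_ne_zero (hh' z hz) (hh0 z hz)) (hne z hz)
    · intro z hz
      refine cond_of (α := -(1 + omegaOf h g z))
        (β := (ε + (starRingEnd ℂ) (omegaOf h g z)) / (1 + ε * omegaOf h g z))
        (by simpa using hz) (hω z hz) ?_ (norm_eps hε (hω z hz)) ?_ (hbound z hz)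
      · rw [norm_neg]
        exact (norm_add_le _ _).trans (by simp)
      · have a1 := hh0 z hz
        have a3 := hh' z hz
        have a4 := hne z hz
        have a5 := hden z hz
        have a6 := Complex.mul_conj' (omegaOf h g z)
        simp only [preSch]
        generalize omegaOf h g z = w at *
        generalize deriv (omegaOf h g) z = w' at *
        generalize (starRingEnd ℂ) w = wb at *
        rw [← a6] at a5 ⊢
        field_simp
        ring
  have key2 : ∀ t : ℂ, t ≠ 0 → ‖t - 1‖ ≤ 1 →
      Set.InjOn (fun z => exp (t * H z)) (Metric.ball (0 : ℂ) 1) := by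
    intro t ht0 ht
    have hE : ∀ z ∈ Metric.ball (0 : ℂ) 1, HasDerivAt (fun z => exp (t * H z))
        (exp (t * H z) * (t * (deriv h z / h z))) z :=
      fun z hz => ((hH z hz).const_mul t).cexp
    refine ahlfors_analytic (c := c) hc hc'
      (d := fun z => exp (t * H z) * (t * (deriv h z / h z)))
      (e := fun z => exp (t * H z) * (t * (deriv h z / h z)) * (t * (deriv h z / h z)) +
        exp (t * H z) * (t * ((deriv (deriv h) z * h z - deriv h z * deriv h z) / h z ^ 2)))
        hE ?_ ?_ ?_
    · intro z hz
      exact (hE z hz).mul ((hLD z hz).const_mul t)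
    · intro z hz
      exact mul_ne_zero (exp_ne_zero _) (mul_ne_zero ht0 (div_ne_zero (hh' z hz) (hh0 z hz)))
    · intro z hz
      refine cond_of (α := (t - 1) - omegaOf h g z)
        (β := (starRingEnd ℂ) (omegaOf h g z))
        (by simpa using hz) (hω z hz) ?_ (by simpa using (hω z hz).le) ?_ (hbound z hz)
      · exact (norm_sub_le _ _).trans (by linarith)
      · have a1 := hh0 z hz
        have a3 := hh' z hz
        have a5 := hden z hz
        have a4 := exp_ne_zero (t * H z)
        simp only [preSch]
        generalize exp (t * H z) = E at *
        field_simp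
        ring
  -- conclusion
  intro z1 hz1 z2 hz2 heq
  by_contra hne
  set A := H z1 - H z2 with hA
  set B := G z1 - G z2 with hB
  have hAB : ‖B‖ < ‖A‖ := by
    by_contra hcon
    push Not at hcon
    by_cases hB0 : B = 0
    · have hA0 : A = 0 := by simpa [hB0] using hcon
      exact hne (key1 0 (by simp) hz1 hz2 (by simpa using sub_eq_zero.mp hA0))
    · refine hne (key1 (-A / B) ?_ hz1 hz2 ?_)
      · rw [norm_div, norm_neg]
        exact div_le_one_of_le₀ hcon (norm_nonneg _)
      · have : A + -A / B * B = 0 := by field_simp; ring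
        simp only
        generalize -A / B = x at *
        rw [hA, hB] at this
        linear_combination this
  have key3 : ∀ x : ℂ, x ^ 2 = 1 → Real.pi ≤ (x * A).im → False := by
    intro x hx him
    have hpi := Real.pi_pos
    have hx0 : x ≠ 0 := by
      rintro rfl
      simp at hx
    have hA0 : A ≠ 0 := by
      rintro h0
      rw [h0] at him
      simp at him
      linarith
    have hns : 0 < Complex.normSq (x * A) := Complex.normSq_pos.mpr (mul_ne_zero hx0 hA0)
    have hkey : ‖2 * Real.pi * I / (x * A) - 1‖ ≤ 1 := by
      have hxA := mul_ne_zero hx0 hA0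
      have e1 : 2 * Real.pi * I / (x * A) - 1 = (2 * Real.pi * I - x * A) / (x * A) := by
        rw [sub_div, div_self hxA]
      rw [e1, norm_div]
      refine div_le_one_of_le₀ ?_ (norm_nonneg _)
      rw [← sq_le_sq₀ (norm_nonneg _) (norm_nonneg _)]
      generalize x * A = y at *
      simp only [← Complex.normSq_eq_norm_sq, Complex.normSq_apply]
      simp
      nlinarith
    refine hne (key2 _ (div_ne_zero Complex.two_pi_I_ne_zero (mul_ne_zero hx0 hA0)) hkey hz1 hz2 ?_)
    simp only
    have hh1 : 2 * Real.pi * I / (x * A) * A = x * (2 * Real.pi * I) := by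
      field_simp
      linear_combination (-(1 : ℂ)) * hx
    have hh2 : 2 * Real.pi * I / (x * A) * H z1 =
        2 * Real.pi * I / (x * A) * H z2 + x * (2 * Real.pi * I) := by
      rw [← hh1, hA]; ring
    rw [hh2, exp_add]
    have hx1 : x = 1 ∨ x = -1 := by simpa using hx
    rcases hx1 with rfl | rfl
    · simp
    · simp [exp_neg]
  simp only [hHe z1 hz1, hHe z2 hz2, hGe z1 hz1, hGe z2 hz2, ← exp_conj, ← exp_add] at heq
  obtain ⟨n, hn⟩ := exp_eq_exp_iff_exists_int.mp heq
  have hn' : A + (starRingEnd ℂ) B = n * (2 * Real.pi * I) := by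
    rw [hA, hB, map_sub]
    linear_combination hn
  have hre : A.re + B.re = 0 := by simpa using congrArg Complex.re hn'
  have him : A.im - B.im = n * (2 * Real.pi) := by
    have := congrArg Complex.im hn'
    simpa [sub_eq_add_neg] using this
  have hsq : B.im ^ 2 < A.im ^ 2 := by
    have : ‖B‖ ^ 2 < ‖A‖ ^ 2 := by nlinarith [norm_nonneg B]
    rw [← Complex.normSq_eq_norm_sq, ← Complex.normSq_eq_norm_sq, Complex.normSq_apply,
      Complex.normSq_apply, show A.re = -B.re by linarith] at this
    nlinarith
  have hpi := Real.pi_pos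
  have habs := sq_lt_sq.mp hsq
  rcases lt_trichotomy n 0 with hneg | h0 | hpos
  · have hn1 : (n : ℝ) ≤ -1 := by exact_mod_cast (by omega : n ≤ -1)
    refine key3 (-1) (by norm_num) ?_
    simp
    have h1 : A.im - B.im ≤ -(2 * Real.pi) := by rw [him]; nlinarith
    rcases abs_cases A.im with h | h <;> rcases abs_cases B.im with h' | h' <;> linarith
  · rw [h0] at him
    have : A.im = B.im := by simp at him; linarith
    rw [this] at hsq
    exact lt_irrefl _ hsq
  · have hn1 : (1 : ℝ) ≤ n := by exact_mod_cast hpos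
    refine key3 1 (by norm_num) ?_
    simp
    have h1 : 2 * Real.pi ≤ A.im - B.im := by rw [him]; nlinarith
    rcases abs_cases A.im with h | h <;> rcases abs_cases B.im with h' | h' <;> linarith
end
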